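/- arXiv:math/9808087 — 3 statements merged into one kernel-verified Lean document; each statement's English description precedes it below -/
import Mathlib

section
/- For every integer n ≥ 1 there exists a discrete subset D of ℂⁿ such that the only automorphism φ of ℂⁿ satisfying φ(D) = D is the identity map of ℂⁿ. -/
open Set Metric Filter Topology

section Analytic
variable {E G : Type*} [NormedAddCommGroup E] [NormedSpace ℂ E]
  [NormedAddCommGroup G] [NormedSpace ℂ G]

/-- Cauchy estimate for the Fréchet derivative. -/
lemma norm_fderiv_le_of_norm_le_ball {F : E → G} (hF : Differentiable ℂ F) {a : E} {r M : ℝ}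
    (hr : 0 < r) (hM : ∀ z ∈ ball a r, ‖F z‖ ≤ M) : ‖fderiv ℂ F a‖ ≤ 2 * M / r := by
  refine Complex.norm_fderiv_le_div_of_mapsTo_ball hF.differentiableOn (fun z hz => ?_) hr
  rw [mem_closedBall, dist_eq_norm]
  linarith [norm_sub_le (F z) (F a), hM z hz, hM a (mem_ball_self hr)]

/-- The derivative of a bounded holomorphic map is Lipschitz away from the boundary. -/
lemma norm_fderiv_sub_fderiv_le {F : E → G} (hF : Differentiable ℂ F) {a x y : E} {r t M : ℝ}
    (hr : 0 < r) (hM : ∀ z ∈ ball a t, ‖F z‖ ≤ M) (hx : dist x a + 2 * r ≤ t)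
    (hy : dist y a + 2 * r ≤ t) :
    ‖fderiv ℂ F x - fderiv ℂ F y‖ ≤ 4 * M / r ^ 2 * ‖x - y‖ := by
  let _ : NormedSpace ℝ E := .restrictScalars ℝ ℂ E
  have hlip : ∀ u ∈ ball a (t - r), ‖fderiv ℂ F u‖ ≤ 2 * M / r := fun u hu =>
    norm_fderiv_le_of_norm_le_ball hF hr fun z hz => hM z <| by
      rw [mem_ball] at *
      linarith [dist_triangle z u a]
  let H : E → G := fun u => F (u + x) - F (u + y)
  have hH : Differentiable ℂ H := by fun_prop
  have hbound : ∀ u ∈ ball (0 : E) r, ‖H u‖ ≤ 2 * M / r * ‖x - y‖ := by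
    intro u hu
    have hmem : ∀ p : E, dist p a + 2 * r ≤ t → u + p ∈ ball a (t - r) := by
      intro p hp
      rw [mem_ball] at *
      have : dist (u + p) p = dist u 0 := by simp [dist_eq_norm]
      linarith [dist_triangle (u + p) p a]
    have := (convex_ball a (t - r)).norm_image_sub_le_of_norm_fderiv_le
      (fun z _ => hF z) hlip (hmem y hy) (hmem x hx)
    simpa [H] using this
  have h0 := norm_fderiv_le_of_norm_le_ball hH hr hbound
  have hd : fderiv ℂ H 0 = fderiv ℂ F x - fderiv ℂ F y := by
    have h1 := fderiv_fun_sub (𝕜 := ℂ) (f := fun u => F (u + x)) (g := fun u => F (u + y))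
      (x := 0) (by fun_prop) (by fun_prop)
    simpa [H, fderiv_comp_add_right] using h1
  rw [hd] at h0
  refine h0.trans (le_of_eq ?_)
  field_simp
  ring

/-- Directional derivatives of a holomorphic map are holomorphic along complex lines. -/
lemma differentiable_fderiv_smul_apply [CompleteSpace G] {F : E → G} (hF : Differentiable ℂ F)
    (e v : E) : Differentiable ℂ fun w : ℂ => fderiv ℂ F (w • e) v := by
  let _ : NormedSpace ℝ E := .restrictScalars ℝ ℂ E
  intro w₀
  set a := w₀ • e with ha
  obtain ⟨t, ht, hM⟩ : ∃ t > 0, ∀ z ∈ ball a t, ‖F z‖ ≤ ‖F a‖ + 1 := by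
    have : ∀ᶠ z in 𝓝 a, ‖F z‖ < ‖F a‖ + 1 :=
      (hF.continuous.norm.continuousAt (x := a)).eventually_lt_const (by linarith)
    obtain ⟨t, ht, h⟩ := Metric.eventually_nhds_iff_ball.1 this
    exact ⟨t, ht, fun z hz => (h z hz).le⟩
  set C := 4 * (‖F a‖ + 1) / (t / 4) ^ 2 with hC
  have hC0 : 0 ≤ C := by positivity
  let U : Set ℂ := (fun w : ℂ => w • e) ⁻¹' ball a (t / 4)
  have hU : IsOpen U := isOpen_ball.preimage (by fun_prop)
  have hw₀ : w₀ ∈ U := by simp only [U, mem_preimage]; exact mem_ball_self (by positivity)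
  let Fq : ℂ → ℂ → G := fun ε w => ε⁻¹ • (F (w • e + ε • v) - F (w • e))
  have hlim : TendstoUniformlyOn Fq (fun w => fderiv ℂ F (w • e) v) (𝓝[≠] 0) U := by
    rw [Metric.tendstoUniformlyOn_iff]
    intro δ hδ
    have hsmall : ∀ᶠ ε : ℂ in 𝓝[≠] 0, ‖ε • v‖ < t / 4 ∧ C * ‖ε • v‖ * ‖v‖ < δ := by
      refine Filter.Eventually.filter_mono nhdsWithin_le_nhds ?_
      have h1 : Continuous fun ε : ℂ => ‖ε • v‖ := by fun_prop
      have h2 : Continuous fun ε : ℂ => C * ‖ε • v‖ * ‖v‖ := by fun_prop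
      exact (h1.continuousAt.eventually_lt_const (by simpa using ht)).and
        (h2.continuousAt.eventually_lt_const (by simpa using hδ))
    filter_upwards [hsmall, self_mem_nhdsWithin] with ε hε hε0 w hw
    have hε0 : ε ≠ 0 := hε0
    have hw : dist (w • e) a < t / 4 := hw
    set x := w • e
    have hmv : ‖F (x + ε • v) - F x - fderiv ℂ F x (x + ε • v - x)‖
        ≤ C * ‖ε • v‖ * ‖x + ε • v - x‖ := by
      refine (convex_closedBall x ‖ε • v‖).norm_image_sub_le_of_norm_fderiv_le'
        (fun z _ => hF z) (fun z hz => ?_) (mem_closedBall_self (norm_nonneg _)) (by simp)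
      rw [mem_closedBall] at hz
      refine (norm_fderiv_sub_fderiv_le hF (a := a) (t := t) (r := t / 4) (by positivity) hM
        ?_ ?_).trans ?_
      · linarith [dist_triangle z x a]
      · linarith
      · rw [dist_eq_norm] at hz
        gcongr
    rw [add_sub_cancel_left, map_smul] at hmv
    rw [dist_comm, dist_eq_norm]
    have heq : Fq ε w - fderiv ℂ F x v
        = ε⁻¹ • (F (x + ε • v) - F x - ε • fderiv ℂ F x v) := by
      simp only [Fq, smul_sub, inv_smul_smul₀ hε0]
      rfl
    rw [heq, norm_smul, norm_inv]
    calc ‖ε‖⁻¹ * ‖F (x + ε • v) - F x - ε • fderiv ℂ F x v‖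
        ≤ ‖ε‖⁻¹ * (C * ‖ε • v‖ * ‖ε • v‖) := by gcongr
      _ = C * ‖ε • v‖ * ‖v‖ := by
        rw [norm_smul]
        have : ‖ε‖ ≠ 0 := by simpa using hε0
        field_simp
      _ < δ := hε.2
  exact (hlim.tendstoLocallyUniformlyOn.differentiableOn
    (Eventually.of_forall fun ε => (by fun_prop : Differentiable ℂ (Fq ε)).differentiableOn)
    hU).differentiableAt (hU.mem_nhds hw₀)

lemma differentiable_det_fderiv_smul [FiniteDimensional ℂ E] {F : E → E}
    (hF : Differentiable ℂ F) (e : E) :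
    Differentiable ℂ fun w : ℂ => (fderiv ℂ F (w • e)).det := by
  have := FiniteDimensional.complete ℂ E
  let b := Module.finBasis ℂ E
  have h : ∀ w : ℂ, (fderiv ℂ F (w • e)).det = Matrix.det (Matrix.of fun i j =>
      (b.coord i).toContinuousLinearMap (fderiv ℂ F (w • e) (b j))) := by
    intro w
    rw [ContinuousLinearMap.det, ← LinearMap.det_toMatrix b]
    congr 1
    ext i j
    simp [LinearMap.toMatrix_apply]
  simp only [h, Matrix.det_apply, Matrix.of_apply]
  have := fun j => differentiable_fderiv_smul_apply hF e (b j)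
  fun_prop

/-- A Harnack-type lower bound for nonvanishing bounded holomorphic functions on a disc. -/
lemma exp_neg_le_norm_of_ne_zero {f : ℂ → ℂ} {ρ M δ : ℝ} (hM : 0 < M)
    (hf : Differentiable ℂ f) (h0 : ∀ w, f w ≠ 0) (hb : ∀ w ∈ ball (0 : ℂ) ρ, ‖f w‖ ≤ M)
    (hδ : 0 < δ) (hδf : δ ≤ ‖f 0‖) {w : ℂ} (hw : ‖w‖ < ρ) :
    δ * Real.exp (-(2 * (|Real.log (M / δ)| + 1) * ‖w‖ / (ρ - ‖w‖))) ≤ ‖f w‖ := by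
  have hρ : 0 < ρ := (norm_nonneg w).trans_lt hw
  have hdiff : DifferentiableOn ℂ (fun z => deriv f z / f z) (ball 0 ρ) :=
    (hf.deriv.div hf h0).differentiableOn
  obtain ⟨g, hg0, hg⟩ := hdiff.isExactOn_ball.with_val_at 0 0
  have hconst : ∀ z ∈ ball (0 : ℂ) ρ, f z = f 0 * Complex.exp (g z) := by
    intro z hz
    have hder : ∀ z ∈ ball (0 : ℂ) ρ,
        HasDerivAt (fun z => f z * Complex.exp (-g z)) 0 z := by
      intro z hz
      have hz0 := h0 z
      refine ((hf z).hasDerivAt.fun_mul (hg z hz).fun_neg.cexp).congr_deriv ?_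
      field_simp
      ring
    have h := (convex_ball (0 : ℂ) ρ).is_const_of_fderivWithin_eq_zero (𝕜 := ℂ)
      (f := fun z => f z * Complex.exp (-g z))
      (fun z hz => (hder z hz).differentiableAt.differentiableWithinAt)
      (fun z hz => by
        rw [fderivWithin_of_isOpen isOpen_ball hz]
        simpa using (hder z hz).hasFDerivAt.fderiv) hz (mem_ball_self hρ)
    simp only [hg0, neg_zero, Complex.exp_zero, mul_one] at h
    rw [← h, mul_assoc, ← Complex.exp_add]
    simp
  have hnorm : ∀ z ∈ ball (0 : ℂ) ρ, ‖f z‖ = ‖f 0‖ * Real.exp (g z).re := by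
    intro z hz
    rw [hconst z hz, norm_mul, Complex.norm_exp]
  have hmaps : MapsTo g (ball 0 ρ) {z | z.re ≤ |Real.log (M / δ)| + 1} := by
    intro z hz
    have h1 := hb z hz
    rw [hnorm z hz] at h1
    have h2 : Real.exp (g z).re ≤ M / δ := by
      rw [le_div_iff₀ hδ]
      nlinarith [Real.exp_pos (g z).re]
    have h3 := Real.log_le_log (Real.exp_pos _) h2
    rw [Real.log_exp] at h3
    show (g z).re ≤ _
    linarith [le_abs_self (Real.log (M / δ))]
  have hwb : w ∈ ball (0 : ℂ) ρ := by simpa using hw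
  have hbc := Complex.borelCaratheodory_zero (by positivity)
    (fun z hz => (hg z hz).differentiableAt.differentiableWithinAt) hmaps hρ hwb hg0
  rw [hnorm w hwb]
  gcongr
  linarith [neg_abs_le (g w).re, Complex.abs_re_le_norm (g w)]


lemma exists_norm_det_le [FiniteDimensional ℂ E] (M : ℝ) :
    ∃ C > 0, ∀ A : E →L[ℂ] E, ‖A‖ ≤ M → ‖A.det‖ ≤ C := by
  have : ProperSpace (E →L[ℂ] E) := FiniteDimensional.proper ℂ _
  have : CompleteSpace E := FiniteDimensional.complete ℂ E
  obtain ⟨C, hC⟩ := (isCompact_closedBall (0 : E →L[ℂ] E) M).exists_bound_of_continuousOn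
    (ContinuousLinearMap.continuous_det (𝕜 := ℂ) (E := E)).continuousOn
  exact ⟨max C 1, by positivity, fun A hA => (hC A (by simpa using hA)).trans (le_max_left _ _)⟩

lemma exists_norm_inverse_le [FiniteDimensional ℂ E] (M : ℝ) {c : ℝ} (hc : 0 < c) :
    ∃ C > 0, ∀ A : E →L[ℂ] E, ‖A‖ ≤ M → c ≤ ‖A.det‖ →
      ∃ B : E →L[ℂ] E, (∀ y, A (B y) = y) ∧ ‖B‖ ≤ C := by
  have : ProperSpace (E →L[ℂ] E) := FiniteDimensional.proper ℂ _
  have : CompleteSpace E := FiniteDimensional.complete ℂ E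
  have hunit : ∀ A : E →L[ℂ] E, c ≤ ‖A.det‖ → IsUnit A := by
    intro A hA
    have h0 : A.det ≠ 0 := fun h => by simp [h] at hA; linarith
    exact ⟨(A.toContinuousLinearEquivOfDetNeZero h0).toUnit,
      by ext; simp [ContinuousLinearEquiv.toUnit]⟩
  have hK : IsCompact (closedBall (0 : E →L[ℂ] E) M ∩ {A | c ≤ ‖A.det‖}) :=
    (isCompact_closedBall _ _).inter_right
      (isClosed_le continuous_const (ContinuousLinearMap.continuous_det (𝕜 := ℂ) (E := E)).norm)
  obtain ⟨C, hC⟩ := hK.exists_bound_of_continuousOn (f := Ring.inverse) (by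
    rintro A ⟨-, hA⟩
    obtain ⟨u, rfl⟩ := hunit A hA
    exact (NormedRing.inverse_continuousAt u).continuousWithinAt)
  refine ⟨max C 1, by positivity, fun A hA hAc => ⟨Ring.inverse A, fun y => ?_,
    (hC A ⟨by simpa using hA, hAc⟩).trans (le_max_left _ _)⟩⟩
  have := Ring.mul_inverse_cancel A (hunit A hAc)
  exact congrArg (fun T : E →L[ℂ] E => T y) this

/-- A quantitative inverse function theorem: near a point where the derivative has a bounded
right inverse, a bounded holomorphic map covers a ball of controlled radius. -/
lemma ball_subset_image_of_rightInverse [CompleteSpace E] {F : E → E} (hF : Differentiable ℂ F)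
    {a z : E} {r t M C ε : ℝ} (hr : 0 < r) (hC : 0 < C) (hε : 0 < ε) (hεr : ε ≤ r)
    (hM : ∀ x ∈ ball a t, ‖F x‖ ≤ M) (hz : dist z a + 3 * r ≤ t) {B : E →L[ℂ] E}
    (hB : ∀ y, fderiv ℂ F z (B y) = y) (hBC : ‖B‖ ≤ C)
    (hεC : 4 * M / r ^ 2 * ε ≤ 1 / (2 * C)) :
    ball (F z) (ε / (2 * C)) ⊆ F '' ball a t := by
  let _ : NormedSpace ℝ E := .restrictScalars ℝ ℂ E
  have hM0 : 0 ≤ M := (norm_nonneg _).trans (hM z (by rw [mem_ball]; linarith))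
  let inv : (fderiv ℂ F z).NonlinearRightInverse :=
    { toFun := B
      nnnorm := ⟨C, hC.le⟩
      bound' := fun y => (B.le_opNorm y).trans (by gcongr; exact hBC)
      right_inv' := hB }
  have happrox : ApproximatesLinearOn F (fderiv ℂ F z) (closedBall z ε)
      ⟨1 / (2 * C), by positivity⟩ := by
    intro x hx y hy
    refine (convex_closedBall z ε).norm_image_sub_le_of_norm_fderiv_le'
      (fun u _ => hF u) (fun u hu => ?_) hy hx
    rw [mem_closedBall] at hu
    refine (norm_fderiv_sub_fderiv_le hF hr hM ?_ ?_).trans (le_trans ?_ hεC)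
    · linarith [dist_triangle u z a]
    · linarith
    · rw [dist_eq_norm] at hu
      gcongr
  have hsurj := happrox.surjOn_closedBall_of_nonlinearRightInverse inv hε.le Subset.rfl
  intro y hy
  obtain ⟨x, hx, rfl⟩ := hsurj (show y ∈ closedBall (F z) _ from by
    refine ball_subset_closedBall ?_
    convert hy using 2
    show (C⁻¹ - 1 / (2 * C)) * ε = ε / (2 * C)
    field_simp
    norm_num)
  refine ⟨x, ?_, rfl⟩
  rw [mem_closedBall] at hx
  rw [mem_ball]
  linarith [dist_triangle x z a]

lemma det_fderiv_ne_zero_of_leftInverse [FiniteDimensional ℂ E] {F H : E → E}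
    (hF : Differentiable ℂ F) (hH : Differentiable ℂ H) (h : Function.LeftInverse H F) (z : E) :
    (fderiv ℂ F z).det ≠ 0 := by
  have hcomp : (fderiv ℂ H (F z)).comp (fderiv ℂ F z) = ContinuousLinearMap.id ℂ E := by
    rw [← fderiv_comp z (hH _) (hF z), h.comp_eq_id, fderiv_id]
  have hdet := congrArg ContinuousLinearMap.det hcomp
  intro h0
  have hmul : ((fderiv ℂ H (F z)).comp (fderiv ℂ F z)).det
      = (fderiv ℂ H (F z)).det * (fderiv ℂ F z).det := LinearMap.det_comp _ _
  rw [hmul, h0, mul_zero] at hdet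
  simp [ContinuousLinearMap.det] at hdet

/-- If a bounded family of automorphisms grows past the sphere of radius `R` strictly inside
the domain, then the images contain balls of a uniform radius centred on that sphere. -/
lemma exists_uniform_ball_subset_image [FiniteDimensional ℂ E] (T R M : ℝ) {η δ : ℝ}
    (hη : 0 < η) (hδ : 0 < δ) :
    ∃ ρ > 0, ∀ F H : E → E, Differentiable ℂ F → Differentiable ℂ H →
      Function.LeftInverse H F → ‖F 0‖ < R → δ ≤ ‖(fderiv ℂ F 0).det‖ →
      ∀ s t : ℝ, s + η ≤ t → t ≤ T → (∀ z ∈ ball (0 : E) t, ‖F z‖ ≤ M) →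
      (∃ z, ‖z‖ ≤ s ∧ R ≤ ‖F z‖) →
      ∃ y, ‖y‖ = R ∧ ball y ρ ⊆ F '' ball 0 t := by
  have : CompleteSpace E := FiniteDimensional.complete ℂ E
  obtain ⟨K, hK, hKdet⟩ := exists_norm_det_le (E := E) (2 * M / (η / 4))
  set c := δ * Real.exp (-(2 * (|Real.log (K / δ)| + 1) * |T| / (η / 2))) with hc
  have hc0 : 0 < c := by positivity
  obtain ⟨C, hC, hCinv⟩ := exists_norm_inverse_le (E := E) (2 * M / (η / 4)) hc0
  set L := 4 * |M| / (η / 4) ^ 2 + 1 with hL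
  have hL0 : 0 < L := by positivity
  set ε := min (η / 4) (1 / (2 * C * L)) with hε
  have hε0 : 0 < ε := by positivity
  refine ⟨ε / (2 * C), by positivity, ?_⟩
  rintro F H hF hH hHF hF0 hdet s t hst htT hM ⟨z₁, hz₁s, hz₁R⟩
  let _ : NormedSpace ℝ E := .restrictScalars ℝ ℂ E
  obtain ⟨z, hzs, hzR⟩ : ∃ z, ‖z‖ ≤ s ∧ ‖F z‖ = R := by
    have hcont : ContinuousOn (fun u : ℝ => ‖F ((u : ℂ) • z₁)‖) (Icc 0 1) := by
      have := hF.continuous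
      fun_prop
    obtain ⟨u, hu, huR⟩ := intermediate_value_Icc zero_le_one hcont
      (show R ∈ Icc _ _ from ⟨by simpa using hF0.le, by simpa using hz₁R⟩)
    refine ⟨(u : ℂ) • z₁, ?_, huR⟩
    rw [norm_smul, Complex.norm_real, Real.norm_of_nonneg hu.1]
    nlinarith [norm_nonneg z₁, hu.2]
  have hs0 : 0 ≤ s := (norm_nonneg z).trans hzs
  have hderiv : ∀ x : E, ‖x‖ < s + η / 2 → ‖fderiv ℂ F x‖ ≤ 2 * M / (η / 4) := fun x hx =>
    norm_fderiv_le_of_norm_le_ball hF (by positivity) fun u hu => hM u <| by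
      rw [mem_ball, dist_eq_norm] at hu
      rw [mem_ball_zero_iff]
      linarith [norm_le_norm_sub_add u x]
  have hdetz : c ≤ ‖(fderiv ℂ F z).det‖ := by
    rcases eq_or_ne z 0 with rfl | hz0
    · refine le_trans ?_ hdet
      rw [hc]
      refine mul_le_of_le_one_right hδ.le (Real.exp_le_one_iff.2 ?_)
      rw [neg_nonpos]
      positivity
    have hzpos : 0 < ‖z‖ := norm_pos_iff.2 hz0
    set e : E := ((‖z‖⁻¹ : ℝ) : ℂ) • z with he
    have hee : ‖e‖ = 1 := by
      rw [he, norm_smul, Complex.norm_real, norm_inv, norm_norm, inv_mul_cancel₀ hzpos.ne']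
    have hze : ((‖z‖ : ℝ) : ℂ) • e = z := by
      rw [he, smul_smul, ← Complex.ofReal_mul, mul_inv_cancel₀ hzpos.ne']
      simp
    have hharn := exp_neg_le_norm_of_ne_zero (f := fun w : ℂ => (fderiv ℂ F (w • e)).det)
      (ρ := s + η / 2) (w := ((‖z‖ : ℝ) : ℂ)) hK (differentiable_det_fderiv_smul hF e)
      (fun w => det_fderiv_ne_zero_of_leftInverse hF hH hHF _)
      (fun w hw => hKdet _ (hderiv _ (by simpa [norm_smul, hee] using hw))) hδ
      (by simpa using hdet) (by rw [Complex.norm_real, norm_norm]; linarith)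
    rw [hze, Complex.norm_real, norm_norm] at hharn
    refine le_trans ?_ hharn
    rw [hc]
    gcongr
    · linarith [le_abs_self T]
    · linarith
  obtain ⟨B, hB, hBC⟩ := hCinv _ (hderiv z (by linarith)) hdetz
  refine ⟨F z, hzR, ball_subset_image_of_rightInverse hF (r := η / 4) (M := M) (by positivity)
    hC hε0 (min_le_left _ _) hM (by rw [dist_zero_right]; linarith) hB hBC ?_⟩
  calc 4 * M / (η / 4) ^ 2 * ε ≤ L * (1 / (2 * C * L)) := by
        gcongr
        · have : 4 * M / (η / 4) ^ 2 ≤ 4 * |M| / (η / 4) ^ 2 := by gcongr; exact le_abs_self M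
          linarith
        · exact min_le_right _ _
    _ = 1 / (2 * C) := by field_simp

end Analytic

/-- A set in which every pair of distinct points is determined by its distance. -/
def HasDistinctDists {X : Type*} [Dist X] (S : Set X) : Prop :=
  ∀ a ∈ S, ∀ b ∈ S, ∀ c ∈ S, ∀ d ∈ S, a ≠ b → dist a b = dist c d →
    (a = c ∧ b = d) ∨ (a = d ∧ b = c)

lemma HasDistinctDists.insert_of_dist_ne {X : Type*} [MetricSpace X] {S : Set X} {x : X}
    (hS : HasDistinctDists S) (h₁ : ∀ p ∈ S, ∀ q ∈ S, ∀ r ∈ S, dist x p ≠ dist q r)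
    (h₂ : ∀ p ∈ S, ∀ q ∈ S, dist x p = dist x q → p = q) : HasDistinctDists (insert x S) := by
  have h₃ : ∀ p ∈ S, p ≠ x := fun p hp h => h₁ p hp p hp p hp (by simp [h])
  rintro a (rfl | ha) b (rfl | hb) c (rfl | hc) d (rfl | hd) hab h
  all_goals first
    | exact absurd rfl hab
    | exact hS _ ha _ hb _ hc _ hd hab h
    | (simp only [dist_self, dist_eq_zero] at h; exact absurd h hab)
    | grind [dist_comm]

/-- A finite set with distinct distances can be enlarged inside any nonempty open set. -/
lemma HasDistinctDists.exists_insert {E : Type*} [NormedAddCommGroup E] [InnerProductSpace ℝ E]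
    [FiniteDimensional ℝ E] [Nontrivial E] {S : Set E} (hS : HasDistinctDists S)
    (hfin : S.Finite) {U : Set E} (hU : IsOpen U) (hne : U.Nonempty) :
    ∃ x ∈ U, HasDistinctDists (insert x S) := by
  let _ : MeasurableSpace E := borel E
  have : BorelSpace E := ⟨rfl⟩
  let μ : MeasureTheory.Measure E := MeasureTheory.Measure.addHaar
  let bad : Set E := (⋃ p ∈ S, ⋃ q ∈ S, ⋃ r ∈ S, sphere p (dist q r)) ∪
    ⋃ p ∈ S, ⋃ q ∈ S \ {p}, (AffineSubspace.perpBisector p q : Set E)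
  have hbad : μ bad = 0 := by
    refine MeasureTheory.measure_union_null ?_ ?_
    · simp only [MeasureTheory.measure_biUnion_null_iff hfin.countable]
      exact fun p _ q _ r _ => MeasureTheory.Measure.addHaar_sphere μ _ _
    · simp only [MeasureTheory.measure_biUnion_null_iff hfin.countable,
        MeasureTheory.measure_biUnion_null_iff (hfin.countable.mono sdiff_subset)]
      refine fun p _ q hq => MeasureTheory.Measure.addHaar_affineSubspace μ _ ?_
      rw [Ne, AffineSubspace.perpBisector_eq_top]
      exact fun h => hq.2 h.symm
  obtain ⟨x, hxU, hx⟩ : ∃ x ∈ U, x ∉ bad := by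
    by_contra! h
    exact (hU.measure_pos μ hne).ne' (MeasureTheory.measure_mono_null h hbad)
  simp only [bad, mem_union, mem_iUnion, not_or, not_exists, mem_sphere] at hx
  refine ⟨x, hxU, hS.insert_of_dist_ne (fun p hp q hq r hr => hx.1 p hp q hq r hr)
    fun p hp q hq h => ?_⟩
  by_contra hpq
  exact hx.2 p hp q ⟨hq, fun h => hpq h.symm⟩ (AffineSubspace.mem_perpBisector_iff_dist_eq.2 h)

lemma exists_dense_hasDistinctDists (E : Type*) [NormedAddCommGroup E] [InnerProductSpace ℝ E]
    [FiniteDimensional ℝ E] [Nontrivial E] : ∃ Q : Set E, Dense Q ∧ HasDistinctDists Q := by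
  have : ProperSpace E := FiniteDimensional.proper ℝ E
  obtain ⟨b, hbc, hb0, hb⟩ := TopologicalSpace.exists_countable_basis E
  have hbne : b.Nonempty := by
    obtain ⟨v, hv, -⟩ := hb.exists_subset_of_mem_open (mem_univ (0 : E)) isOpen_univ
    exact ⟨v, hv⟩
  obtain ⟨u, rfl⟩ := hbc.exists_eq_range hbne
  have hstep : ∀ (i : ℕ) (S : {S : Set E // S.Finite ∧ HasDistinctDists S}),
      ∃ x ∈ u i, HasDistinctDists (insert x S.1) := fun i S =>
    S.2.2.exists_insert S.2.1 (hb.isOpen ⟨i, rfl⟩)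
      (nonempty_iff_ne_empty.2 fun h => hb0 (h ▸ mem_range_self i))
  choose x hxu hx using hstep
  let S : ℕ → {S : Set E // S.Finite ∧ HasDistinctDists S} := fun k =>
    Nat.rec ⟨∅, finite_empty, fun a ha => ha.elim⟩
      (fun i T => ⟨insert (x i T) T.1, T.2.1.insert _, hx i T⟩) k
  have hmono : Monotone fun k => (S k).1 :=
    monotone_nat_of_le_succ fun k => subset_insert (x k (S k)) (S k).1
  refine ⟨⋃ k, (S k).1, ?_, ?_⟩
  · rw [hb.dense_iff]
    rintro _ ⟨i, rfl⟩ -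
    exact ⟨x i (S i), hxu i (S i), mem_iUnion.2 ⟨i + 1, mem_insert (x i (S i)) (S i).1⟩⟩
  · intro a ha b hb c hc d hd
    simp only [mem_iUnion] at ha hb hc hd
    obtain ⟨i, ha⟩ := ha
    obtain ⟨j, hb⟩ := hb
    obtain ⟨k, hc⟩ := hc
    obtain ⟨l, hd⟩ := hd
    set m := max (max i j) (max k l)
    exact (S m).2.2 a (hmono (by simp [m]) ha) b (hmono (by simp [m]) hb)
      c (hmono (by simp [m]) hc) d (hmono (by simp [m]) hd)

/-- An isometry that preserves a set with distinct distances and at least three points fixes the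
set pointwise. -/
lemma HasDistinctDists.eq_of_isometry {X : Type*} [MetricSpace X] {S : Set X}
    (hS : HasDistinctDists S) {φ : X → X} (hφ : Isometry φ) (hmaps : MapsTo φ S S)
    (hthree : ∀ x : X, ∃ y ∈ S, ∃ z ∈ S, y ≠ z ∧ y ≠ x ∧ z ≠ x) {x : X} (hx : x ∈ S) :
    φ x = x := by
  obtain ⟨y, hy, z, hz, hyz, hyx, hzx⟩ := hthree x
  have h₁ := hS x hx y hy (φ x) (hmaps hx) (φ y) (hmaps hy) hyx.symm (hφ.dist_eq x y).symm
  have h₂ := hS x hx z hz (φ x) (hmaps hx) (φ z) (hmaps hz) hzx.symm (hφ.dist_eq x z).symm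
  grind

lemma Dense.infinite_inter_of_isOpen {X : Type*} [TopologicalSpace X] [T1Space X]
    [∀ x : X, (𝓝[≠] x).NeBot] {Q U : Set X} (hQ : Dense Q) (hU : IsOpen U) (hne : U.Nonempty) :
    (Q ∩ U).Infinite := by
  intro hfin
  obtain ⟨x, hxU, hxQ, hx⟩ := (hQ.sdiff_finite hfin).inter_open_nonempty U hU hne
  exact hx ⟨hxQ, hxU⟩

/-- A dense set contains finite sets meeting all small balls centred on a sphere many times. -/
lemma Dense.exists_finset_lt_card_filter_ball {E : Type*} [NormedAddCommGroup E]
    [NormedSpace ℝ E] [FiniteDimensional ℝ E] [Nontrivial E] {Q : Set E} (hQ : Dense Q)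
    (R : ℝ) {ρ : ℝ} (hρ : 0 < ρ) (N : ℕ) :
    ∃ S : Finset E, ↑S ⊆ Q ∧ (∀ x ∈ S, R - 1 < ‖x‖) ∧
      ∀ y, ‖y‖ = R → ∃ T ⊆ S, (T : Set E) ⊆ ball y ρ ∧ N < T.card := by
  classical
  have : ProperSpace E := FiniteDimensional.proper ℝ E
  have hρ' : 0 < min (ρ / 2) 1 := by positivity
  have hpts : ∀ y : E, ∃ T : Finset E, ↑T ⊆ Q ∩ ball y (min (ρ / 2) 1) ∧ T.card = N + 1 :=
    fun y => (hQ.infinite_inter_of_isOpen isOpen_ball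
      ⟨y, mem_ball_self hρ'⟩).exists_subset_card_eq (N + 1)
  choose T hTQ hTcard using hpts
  obtain ⟨t, hts, hcover⟩ := (isCompact_sphere (0 : E) R).elim_nhds_subcover
    (fun y => ball y (ρ / 2)) fun y _ => ball_mem_nhds y (by positivity)
  refine ⟨t.biUnion T, ?_, ?_, fun y hy => ?_⟩
  · intro x hx
    obtain ⟨y, -, hx⟩ := Finset.mem_biUnion.1 (Finset.mem_coe.1 hx)
    exact (hTQ y hx).1
  · intro x hx
    obtain ⟨y, hyt, hx⟩ := Finset.mem_biUnion.1 hx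
    have h1 : dist x y < 1 := lt_of_lt_of_le (hTQ y hx).2 (min_le_right _ _)
    have h2 : ‖y‖ = R := by simpa using hts y hyt
    rw [dist_eq_norm] at h1
    linarith [norm_sub_norm_le y x, norm_sub_rev x y]
  · obtain ⟨p, hpt, hyp⟩ := mem_iUnion₂.1 (hcover (show y ∈ sphere (0 : E) R by simpa using hy))
    refine ⟨T p, Finset.subset_biUnion_of_mem T hpt, fun x hx => ?_, by rw [hTcard]; omega⟩
    have h1 : dist x p < ρ / 2 := lt_of_lt_of_le (hTQ p hx).2 (min_le_left _ _)
    have h2 : dist y p < ρ / 2 := hyp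
    rw [mem_ball]
    linarith [dist_triangle_right x y p]

lemma dist_map_le_dist_of_norm_le {E : Type*} [NormedAddCommGroup E] [NormedSpace ℂ E]
    {φ : E → E} (hφ : Differentiable ℂ φ) {k₀ : ℕ}
    (h : ∀ k : ℕ, k₀ ≤ k → ∀ z ∈ ball (0 : E) (k - 2), ‖φ z‖ ≤ k + 1) (x y : E) :
    dist (φ x) (φ y) ≤ dist x y := by
  have hder : ∀ c : E, ‖fderiv ℂ φ c‖ ≤ 1 := by
    intro c
    have hlim : Tendsto (fun k : ℕ => ((k : ℝ) + (1 + ‖φ c‖)) / (k + (-2 - ‖c‖))) atTop (𝓝 1) := by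
      simpa [add_comm] using tendsto_add_mul_div_add_mul_atTop_nhds (1 + ‖φ c‖) (-2 - ‖c‖) (1 : ℝ)
        one_ne_zero
    refine ge_of_tendsto hlim ?_
    filter_upwards [eventually_ge_atTop k₀,
      tendsto_natCast_atTop_atTop.eventually_gt_atTop (2 + ‖c‖)] with k hk hkc
    refine Complex.norm_fderiv_le_div_of_mapsTo_ball hφ.differentiableOn (fun z hz => ?_)
      (by linarith)
    rw [mem_ball, dist_eq_norm] at hz
    have hz' := h k hk z (by rw [mem_ball_zero_iff]; linarith [norm_le_norm_sub_add z c])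
    rw [mem_closedBall, dist_eq_norm]
    linarith [norm_sub_le (φ z) (φ c)]
  have := (lipschitzWith_of_nnnorm_fderiv_le (C := 1) hφ fun c => by exact_mod_cast hder c)
  simpa using this.dist_le_mul x y

/-- The growth of an automorphism that preserves a sufficiently unavoidable set is controlled:
`hD` says that points of `D` of norm at most `k` lie in `A k`, and `hcover` that images reaching
beyond the sphere of radius `k + 1` too slowly contain more than `(A k).card` points of `D`. -/
lemma norm_le_of_image_eq {E : Type*} [NormedAddCommGroup E] [NormedSpace ℂ E] [ProperSpace E]
    {D : Set E} {A : ℕ → Finset E} (hD : ∀ (k : ℕ), ∀ x ∈ D, ‖x‖ ≤ k → x ∈ A k)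
    {φ : E → E} (hφ : Continuous φ) (hinj : Function.Injective φ) (himg : φ '' D = D) {k₀ : ℕ}
    (hcover : ∀ k : ℕ, k₀ ≤ k → ∀ s t : ℝ, s + (1 / 2) ^ k ≤ t → t ≤ k →
      (∀ z ∈ ball (0 : E) t, ‖φ z‖ ≤ k + 2) → (∃ z, ‖z‖ ≤ s ∧ k + 1 ≤ ‖φ z‖) →
      ∃ T : Finset E, ↑T ⊆ D ∧ ↑T ⊆ φ '' ball 0 t ∧ (A k).card < T.card)
    {k : ℕ} (hk : k₀ ≤ k) : ∀ z ∈ ball (0 : E) (k - 2), ‖φ z‖ ≤ k + 1 := by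
  classical
  have hstep : ∀ j : ℕ, k₀ ≤ j → ∀ s : ℝ, s + (1 / 2) ^ j ≤ j →
      (∀ z ∈ ball (0 : E) (s + (1 / 2) ^ j), ‖φ z‖ ≤ j + 2) → ∀ z, ‖z‖ ≤ s → ‖φ z‖ ≤ j + 1 := by
    intro j hj s hs hb z hz
    by_contra! hlt
    obtain ⟨T, hTD, hTφ, hcard⟩ := hcover j hj s _ le_rfl hs hb ⟨z, hz, hlt.le⟩
    have hsub : T ⊆ (A j).image φ := by
      intro x hx
      obtain ⟨p, hp, rfl⟩ := hTφ hx
      obtain ⟨q, hqD, hq⟩ := himg.symm.subset (hTD hx)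
      obtain rfl := hinj hq
      rw [mem_ball_zero_iff] at hp
      exact Finset.mem_image_of_mem φ (hD j q hqD (by linarith))
    exact absurd ((Finset.card_le_card hsub).trans Finset.card_image_le) (by omega)
  obtain ⟨M, hM⟩ := (isCompact_closedBall (0 : E) k).exists_bound_of_continuousOn hφ.continuousOn
  obtain ⟨K, hKM⟩ := exists_nat_ge M
  have hind : ∀ j : ℕ, k ≤ j →
      ∀ z ∈ ball (0 : E) (k - 2 * (1 / 2) ^ j), ‖φ z‖ ≤ j + 1 := by
    intro j hj
    refine Nat.decreasingInduction' (n := max j K)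
      (P := fun j => ∀ z ∈ ball (0 : E) (k - 2 * (1 / 2) ^ j), ‖φ z‖ ≤ j + 1)
      (fun i _ hji ih z hz => ?_) (le_max_left _ _) fun z hz => ?_
    · have hki : (k : ℝ) ≤ i := by exact_mod_cast hj.trans hji
      have hpow : (0 : ℝ) < (1 / 2) ^ i := by positivity
      refine hstep i (hk.trans (hj.trans hji)) (k - 2 * (1 / 2) ^ i) (by linarith)
        (fun w hw => ?_) z (by simpa using (mem_ball_zero_iff.1 hz).le)
      have := ih w (by
        rw [mem_ball_zero_iff] at *
        rw [pow_succ]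
        linarith)
      push_cast at this
      linarith
    · have hpow : (0 : ℝ) < (1 / 2) ^ (max j K) := by positivity
      have := hM z (by
        rw [mem_closedBall_zero_iff]
        rw [mem_ball_zero_iff] at hz
        linarith)
      have hK : (K : ℝ) ≤ (max j K : ℕ) := by exact_mod_cast le_max_right _ _
      linarith
  intro z hz
  refine hind k le_rfl z ?_
  rw [mem_ball_zero_iff] at *
  have : ((1 : ℝ) / 2) ^ k ≤ 1 := pow_le_one₀ (by norm_num) (by norm_num)
  linarith

/-- A subset of a normed space is closed and discrete if it has finitely many points in
each ball. -/
lemma isClosed_and_discreteTopology_of_finite_inter {E : Type*} [NormedAddCommGroup E]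
    {D : Set E} (hD : ∀ k : ℕ, (D ∩ closedBall 0 k).Finite) :
    IsClosed D ∧ DiscreteTopology D := by
  rw [← isDiscrete_iff_discreteTopology, isClosed_and_discrete_iff]
  intro x
  obtain ⟨k, hk⟩ := exists_nat_gt ‖x‖
  have hmem : ball (0 : E) k ∩ ((D ∩ closedBall 0 k) \ {x})ᶜ ∈ 𝓝 x :=
    inter_mem (isOpen_ball.mem_nhds (by simpa using hk))
      (((hD k).subset sdiff_subset).isClosed.isOpen_compl.mem_nhds fun h => h.2 rfl)
  rw [disjoint_principal_right]
  filter_upwards [nhdsWithin_le_nhds hmem, self_mem_nhdsWithin] with y hy hyx hyD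
  exact hy.2 ⟨⟨hyD, ball_subset_closedBall hy.1⟩, hyx⟩

/-- Every finite subset of a dense set extends, inside the dense set, to a closed discrete set
whose automorphisms are nonexpanding. -/
lemma exists_unavoidable {E : Type*} [NormedAddCommGroup E] [NormedSpace ℂ E]
    [FiniteDimensional ℂ E] [Nontrivial E] {Q : Set E} (hQ : Dense Q) (A₀ : Finset E)
    (hA₀ : ↑A₀ ⊆ Q) :
    ∃ D : Set E, ↑A₀ ⊆ D ∧ D ⊆ Q ∧ IsClosed D ∧ DiscreteTopology D ∧
      ∀ φ ψ : E → E, Differentiable ℂ φ → Differentiable ℂ ψ → Function.LeftInverse ψ φ →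
        φ '' D = D → ∀ x y, dist (φ x) (φ y) ≤ dist x y := by
  classical
  let _ : NormedSpace ℝ E := .restrictScalars ℝ ℂ E
  have : FiniteDimensional ℝ E := FiniteDimensional.complexToReal E
  have : ProperSpace E := FiniteDimensional.proper ℂ E
  have hη : ∀ k : ℕ, (0 : ℝ) < (1 / 2) ^ k := fun k => by positivity
  have hδ : ∀ k : ℕ, (0 : ℝ) < 1 / (k + 1) := fun k => by positivity
  choose ρ hρ hcover using fun k : ℕ =>
    exists_uniform_ball_subset_image (E := E) k (k + 1) (k + 2) (hη k) (hδ k)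
  choose S hSQ hSnorm hST using fun k N : ℕ =>
    hQ.exists_finset_lt_card_filter_ball ((k : ℝ) + 1) (hρ k) N
  obtain ⟨A, rfl, hAsucc⟩ : ∃ A : ℕ → Finset E, A 0 = A₀ ∧
      ∀ k, A (k + 1) = A k ∪ S k (A k).card :=
    ⟨fun k => Nat.rec A₀ (fun i B => B ∪ S i B.card) k, rfl, fun _ => rfl⟩
  have hmono : Monotone A :=
    monotone_nat_of_le_succ fun k => (hAsucc k).symm ▸ Finset.subset_union_left
  have hAQ : ∀ k, ∀ x ∈ A k, x ∈ Q := by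
    intro k
    induction k with
    | zero => exact hA₀
    | succ k ih =>
      intro x hx
      rw [hAsucc, Finset.mem_union] at hx
      exact hx.elim (ih x) fun hx => hSQ k _ hx
  have hD : ∀ k : ℕ, ∀ x ∈ ⋃ j, (A j : Set E), ‖x‖ ≤ k → x ∈ A k := by
    intro k x hx hxk
    obtain ⟨j, hj⟩ := mem_iUnion.1 hx
    have hj : x ∈ A j := hj
    induction j with
    | zero => exact hmono (Nat.zero_le k) hj
    | succ j ih =>
      rcases le_or_gt (j + 1) k with hjk | hjk
      · exact hmono hjk hj
      rw [hAsucc, Finset.mem_union] at hj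
      rcases hj with hj | hj
      · exact ih hj hj
      · have h1 := hSnorm j _ x hj
        have h2 : (k : ℝ) ≤ j := by exact_mod_cast Nat.lt_succ_iff.1 hjk
        linarith
  obtain ⟨hclosed, hdiscrete⟩ := isClosed_and_discreteTopology_of_finite_inter
    (D := ⋃ j, (A j : Set E)) fun k => (A k).finite_toSet.subset fun x hx =>
      hD k x hx.1 (by simpa using hx.2)
  refine ⟨⋃ j, (A j : Set E), subset_iUnion (fun j => (A j : Set E)) 0, iUnion_subset hAQ,
    hclosed, hdiscrete, fun φ ψ hφ hψ hψφ himg => ?_⟩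
  have hdet : 0 < ‖(fderiv ℂ φ 0).det‖ :=
    norm_pos_iff.2 (det_fderiv_ne_zero_of_leftInverse hφ hψ hψφ 0)
  obtain ⟨k₁, hk₁⟩ := exists_nat_one_div_lt hdet
  obtain ⟨k₂, hk₂⟩ := exists_nat_gt ‖φ 0‖
  refine dist_map_le_dist_of_norm_le hφ (k₀ := max k₁ k₂) fun k hk =>
    norm_le_of_image_eq hD hφ.continuous hψφ.injective himg (fun j hj s t hst ht hb hz => ?_) hk
  have hj₁ : (k₁ : ℝ) ≤ j := by exact_mod_cast (le_max_left _ _).trans hj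
  have hj₂ : (k₂ : ℝ) ≤ j := by exact_mod_cast (le_max_right _ _).trans hj
  obtain ⟨y, hy, hsub⟩ := hcover j φ ψ hφ hψ hψφ (by linarith)
    ((one_div_le_one_div_of_le (by positivity) (by linarith)).trans hk₁.le) s t hst ht hb hz
  obtain ⟨T, hTS, hTball, hcard⟩ := hST j (A j).card y hy
  refine ⟨T, fun x hx => mem_iUnion.2 ⟨j + 1, ?_⟩, hTball.trans hsub, hcard⟩
  rw [hAsucc]
  exact Finset.mem_coe.2 (Finset.mem_union_right _ (hTS hx))

/-- A dense set contains a finite set affinely spanning the space, with at least three points. -/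
lemma Dense.exists_finset_affineSpan_eq_top {E : Type*} [NormedAddCommGroup E]
    [NormedSpace ℝ E] [FiniteDimensional ℝ E] [Nontrivial E] {Q : Set E} (hQ : Dense Q) :
    ∃ A : Finset E, ↑A ⊆ Q ∧ affineSpan ℝ (A : Set E) = ⊤ ∧ 3 ≤ A.card := by
  classical
  obtain ⟨t, htQ, hspan, hind⟩ := exists_affineIndependent ℝ E Q
  have htop : affineSpan ℝ Q = ⊤ := by
    have hcl : IsClosed (affineSpan ℝ Q : Set E) := AffineSubspace.closed_of_finiteDimensional _
    have : closure Q ⊆ affineSpan ℝ Q := hcl.closure_subset_iff.2 (subset_affineSpan ℝ Q)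
    rw [hQ.closure_eq] at this
    exact SetLike.coe_injective (univ_subset_iff.1 this)
  have hfin : t.Finite := finite_set_of_fin_dim_affineIndependent ℝ hind
  have hinf : Q.Infinite := by
    simpa using hQ.infinite_inter_of_isOpen isOpen_univ univ_nonempty
  obtain ⟨B, hBQ, hB⟩ := hinf.exists_subset_card_eq 3
  refine ⟨hfin.toFinset ∪ B, ?_, ?_, hB ▸ Finset.card_le_card Finset.subset_union_right⟩
  · simpa using ⟨htQ, hBQ⟩
  · refine top_unique ?_
    rw [← htop, ← hspan]
    exact affineSpan_mono ℝ (by simp)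

/-- For every integer `n ≥ 1` there exists a discrete subset `D` of `ℂⁿ` such that the only
automorphism `φ` of `ℂⁿ` (i.e. bijective holomorphic map with holomorphic inverse) satisfying
`φ(D) = D` is the identity map of `ℂⁿ`. -/
theorem stmt_0 (n : ℕ) (hn : 1 ≤ n) :
    ∃ D : Set (EuclideanSpace ℂ (Fin n)),
      IsClosed D ∧ DiscreteTopology D ∧
      ∀ φ ψ : EuclideanSpace ℂ (Fin n) → EuclideanSpace ℂ (Fin n),
        Differentiable ℂ φ → Differentiable ℂ ψ →
        Function.LeftInverse ψ φ → Function.RightInverse ψ φ →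
        φ '' D = D → φ = id := by
  classical
  have : Nonempty (Fin n) := ⟨⟨0, hn⟩⟩
  have : Nontrivial (EuclideanSpace ℂ (Fin n)) := inferInstance
  obtain ⟨Q, hQ, hdist⟩ := exists_dense_hasDistinctDists (EuclideanSpace ℂ (Fin n))
  obtain ⟨A, hAQ, hspan, hcard⟩ := hQ.exists_finset_affineSpan_eq_top
  obtain ⟨D, hAD, hDQ, hclosed, hdisc, hD⟩ := exists_unavoidable hQ A hAQ
  refine ⟨D, hclosed, hdisc, fun φ ψ hφ hψ hl hr himg => ?_⟩
  have himg' : ψ '' D = D := by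
    conv_lhs => rw [← himg]
    rw [← image_comp, hl.comp_eq_id, image_id]
  have hiso : Isometry φ := Isometry.of_dist_eq fun x y =>
    (hD φ ψ hφ hψ hl himg x y).antisymm <| by
      simpa [hl x, hl y] using hD ψ φ hψ hφ hr himg' (φ x) (φ y)
  have hdistD : HasDistinctDists D := fun a ha b hb c hc d hd =>
    hdist a (hDQ ha) b (hDQ hb) c (hDQ hc) d (hDQ hd)
  have hthree : ∀ x, ∃ y ∈ D, ∃ z ∈ D, y ≠ z ∧ y ≠ x ∧ z ≠ x := by
    intro x
    have : 1 < (A.erase x).card := by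
      have := Finset.pred_card_le_card_erase (s := A) (a := x)
      omega
    obtain ⟨y, hy, z, hz, hyz⟩ := Finset.one_lt_card.1 this
    rw [Finset.mem_erase] at hy hz
    exact ⟨y, hAD hy.2, z, hAD hz.2, hyz, hy.1, hz.1⟩
  have hfix : ∀ x ∈ D, φ x = x := fun x hx =>
    hdistD.eq_of_isometry hiso (mapsTo_iff_image_subset.2 himg.subset) hthree hx
  let e : EuclideanSpace ℂ (Fin n) ≃ᵢ EuclideanSpace ℂ (Fin n) :=
    ⟨⟨φ, ψ, hl, hr⟩, hiso⟩
  have heq : e.toRealAffineIsometryEquiv.toAffineEquiv.toAffineMap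
      = AffineMap.id ℝ (EuclideanSpace ℂ (Fin n)) :=
    AffineMap.ext_on hspan fun x hx => hfix x (hAD hx)
  exact funext fun x => congrArg (fun f => f x) heq
end

section
/- For every integer n ≥ 1 there exists a discrete subset D of ℂⁿ such that for every nondegenerate holomorphic map F : ℂⁿ → ℂⁿ the image F(ℂⁿ) has non-empty intersection with D. -/
open Set Filter Topology Metric

section UnavoidableSets

variable {E F : Type*} [NormedAddCommGroup E] [NormedSpace ℂ E]
  [NormedAddCommGroup F] [NormedSpace ℂ F]

/-- Cauchy estimate for the derivative of a bounded holomorphic map at the centre of a ball. -/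
theorem norm_fderiv_le_of_forall_mem_ball_norm_le {f : E → F} {x : E} {r M : ℝ} (hr : 0 < r)
    (hf : DifferentiableOn ℂ f (ball x r)) (hM : ∀ y ∈ ball x r, ‖f y‖ ≤ M) :
    ‖fderiv ℂ f x‖ ≤ 2 * M / r := by
  refine Complex.norm_fderiv_le_div_of_mapsTo_ball hf (fun y hy => ?_) hr
  rw [mem_closedBall, dist_eq_norm]
  linarith [norm_sub_le (f y) (f x), hM y hy, hM x (mem_ball_self hr)]

/-- Cauchy estimates for the first two derivatives of a bounded holomorphic map, uniform on a
smaller ball; the second one is expressed as a Lipschitz bound. -/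
theorem exists_cauchy_bounds {a b : ℝ} (hab : b < a) (M : ℝ) :
    ∃ C, ∀ f : E → F, DifferentiableOn ℂ f (ball 0 a) → (∀ x ∈ ball 0 a, ‖f x‖ ≤ M) →
      ∀ x ∈ ball (0 : E) b, ‖fderiv ℂ f x‖ ≤ C ∧
        ∀ y ∈ ball (0 : E) b, ‖fderiv ℂ f y - fderiv ℂ f x‖ ≤ C * ‖y - x‖ := by
  set δ := (a - b) / 2 with hδ
  have hδ0 : 0 < δ := by linarith
  set K := 2 * M / δ with hK
  refine ⟨max K (2 * K / δ), fun f hf hM => ?_⟩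
  have hda : ∀ x ∈ ball (0 : E) a, DifferentiableAt ℂ f x := fun x hx =>
    hf.differentiableAt (isOpen_ball.mem_nhds hx)
  have hK1 : ∀ x ∈ ball (0 : E) (b + δ), ‖fderiv ℂ f x‖ ≤ K := by
    intro x hx
    have hsub : ball x δ ⊆ ball 0 a := by
      apply ball_subset_ball'
      rw [mem_ball] at hx
      linarith
    exact norm_fderiv_le_of_forall_mem_ball_norm_le hδ0 (hf.mono hsub) fun y hy => hM y (hsub hy)
  have hsubδ : ball (0 : E) (b + δ) ⊆ ball 0 a := ball_subset_ball (by linarith)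
  refine fun x hx => ⟨(hK1 x (ball_subset_ball (by linarith) hx)).trans (le_max_left _ _),
    fun y hy => ?_⟩
  have hx' : ∀ z ∈ ball x δ, z ∈ ball (0 : E) (b + δ) := fun z hz => by
    rw [mem_ball] at *
    linarith [dist_triangle z x 0]
  have hy' : ∀ z ∈ ball x δ, z + (y - x) ∈ ball (0 : E) (b + δ) := fun z hz => by
    rw [mem_ball] at *
    have : dist (z + (y - x)) y = dist z x := by
      rw [dist_eq_norm, dist_eq_norm]
      congr 1
      abel
    linarith [dist_triangle (z + (y - x)) y 0]
  have hd2 : ∀ z ∈ ball x δ, HasFDerivAt (fun z => f (z + (y - x)) - f z)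
      (fderiv ℂ f (z + (y - x)) - fderiv ℂ f z) z := fun z hz =>
    ((hasFDerivAt_comp_add_right _).2 (hda _ (hsubδ (hy' z hz))).hasFDerivAt).sub
      (hda _ (hsubδ (hx' z hz))).hasFDerivAt
  have key := norm_fderiv_le_of_forall_mem_ball_norm_le (M := K * ‖y - x‖) hδ0
    (fun z hz => (hd2 z hz).differentiableAt.differentiableWithinAt) (fun z hz => by
      simpa using (convex_ball (0 : E) (b + δ)).norm_image_sub_le_of_norm_fderiv_le
        (fun w hw => hda w (hsubδ hw)) hK1 (hx' z hz) (hy' z hz))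
  rw [(hd2 x (mem_ball_self hδ0)).fderiv, add_sub_cancel] at key
  refine key.trans ?_
  calc 2 * (K * ‖y - x‖) / δ = 2 * K / δ * ‖y - x‖ := by ring
    _ ≤ _ := by gcongr; exact le_max_right _ _

/-- A holomorphic map whose derivative is Lipschitz is approximated to second order by its
derivative. -/
theorem norm_sub_sub_fderiv_le {f : E → F} {b C : ℝ} (hC : 0 ≤ C)
    (hf : DifferentiableOn ℂ f (ball 0 b))
    {x y : E} (hx : x ∈ ball (0 : E) b) (hy : y ∈ ball (0 : E) b)
    (hL : ∀ z ∈ ball (0 : E) b, ‖fderiv ℂ f z - fderiv ℂ f x‖ ≤ C * ‖z - x‖) :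
    ‖f y - f x - fderiv ℂ f x (y - x)‖ ≤ C * ‖y - x‖ * ‖y - x‖ := by
  have hseg : segment ℝ x y ⊆ ball (0 : E) b := (convex_ball (0 : E) b).segment_subset hx hy
  refine (convex_segment x y).norm_image_sub_le_of_norm_fderiv_le'
    (fun z hz => hf.differentiableAt (isOpen_ball.mem_nhds (hseg hz)))
    (fun z hz => (hL z (hseg hz)).trans ?_) (left_mem_segment ℝ x y) (right_mem_segment ℝ x y)
  gcongr
  rw [segment_eq_image'] at hz
  obtain ⟨t, ht, rfl⟩ := hz
  simp only [add_sub_cancel_left, norm_smul, Real.norm_eq_abs, abs_of_nonneg ht.1]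
  exact mul_le_of_le_one_left (norm_nonneg _) ht.2

/-- A pointwise limit along an ultrafilter of uniformly bounded holomorphic maps is holomorphic,
and its derivative is the limit of the derivatives. -/
theorem tendsto_fderiv_and_differentiableAt_of_ultrafilter [FiniteDimensional ℂ E]
    [FiniteDimensional ℂ F] {ι : Type*} (U : Ultrafilter ι) {f : ι → E → F} {g : E → F} {a M : ℝ}
    (hd : ∀ᶠ i in (U : Filter ι), DifferentiableOn ℂ (f i) (ball 0 a))
    (hM : ∀ᶠ i in (U : Filter ι), ∀ x ∈ ball (0 : E) a, ‖f i x‖ ≤ M)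
    (hg : ∀ x ∈ ball (0 : E) a, Tendsto (fun i => f i x) U (𝓝 (g x)))
    {x : E} (hx : x ∈ ball (0 : E) a) :
    Tendsto (fun i => fderiv ℂ (f i) x) U (𝓝 (fderiv ℂ g x)) ∧ DifferentiableAt ℂ g x := by
  obtain ⟨b, hxb, hba⟩ := exists_between (mem_ball.1 hx)
  obtain ⟨C, hC⟩ := exists_cauchy_bounds (E := E) (F := F) hba M
  have hbx : x ∈ ball (0 : E) b := hxb
  have hsub : ball (0 : E) b ⊆ ball 0 a := ball_subset_ball hba.le
  have hC0 : 0 ≤ C := by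
    obtain ⟨i, hi, hi'⟩ := (hd.and hM).exists
    exact (norm_nonneg _).trans (hC (f i) hi hi' x hbx).1
  have : ProperSpace (E →L[ℂ] F) := FiniteDimensional.proper ℂ _
  obtain ⟨L, -, hL⟩ : ∃ L ∈ closedBall (0 : E →L[ℂ] F) C,
      Tendsto (fun i => fderiv ℂ (f i) x) U (𝓝 L) := by
    refine (isCompact_closedBall (0 : E →L[ℂ] F) C).ultrafilter_le_nhds
      (U.map fun i => fderiv ℂ (f i) x) ?_
    rw [le_principal_iff, Ultrafilter.mem_coe, Ultrafilter.mem_map]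
    filter_upwards [hd, hM] with i hi hi'
    simpa using (hC (f i) hi hi' x hbx).1
  have hbound : ∀ y ∈ ball (0 : E) b, ‖g y - g x - L (y - x)‖ ≤ C * ‖y - x‖ * ‖y - x‖ := by
    intro y hy
    have hlim : Tendsto (fun i => ‖f i y - f i x - fderiv ℂ (f i) x (y - x)‖) U
        (𝓝 ‖g y - g x - L (y - x)‖) :=
      (((hg y (hsub hy)).sub (hg x hx)).sub
        (((ContinuousLinearMap.apply ℂ F (y - x)).continuous.tendsto L).comp hL)).norm
    refine le_of_tendsto hlim ?_
    filter_upwards [hd, hM] with i hi hi'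
    exact norm_sub_sub_fderiv_le hC0 (hi.mono hsub) hbx hy (hC (f i) hi hi' x hbx).2
  have hder : HasFDerivAt g L x := by
    rw [hasFDerivAt_iff_isLittleO]
    have hO : (fun y => g y - g x - L (y - x)) =O[𝓝 x] fun y => ‖y - x‖ * ‖y - x‖ := by
      refine Asymptotics.IsBigO.of_bound C ?_
      filter_upwards [isOpen_ball.mem_nhds hbx] with y hy
      simpa [mul_assoc] using hbound y hy
    refine hO.trans_isLittleO ?_
    have h0 : (fun y => ‖y - x‖) =o[𝓝 x] fun _ => (1 : ℝ) := by
      rw [Asymptotics.isLittleO_one_iff]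
      have : ContinuousAt (fun y => ‖y - x‖) x := by fun_prop
      simpa [ContinuousAt] using this
    refine Asymptotics.IsLittleO.of_norm_right ?_
    simpa using h0.mul_isBigO (Asymptotics.isBigO_refl (fun y => ‖y - x‖) (𝓝 x))
  exact ⟨hder.fderiv ▸ hL, hder.differentiableAt⟩

/-- Directional derivatives of a bounded holomorphic map are holomorphic. -/
theorem differentiableOn_fderiv_apply [FiniteDimensional ℂ E] [FiniteDimensional ℂ F]
    {f : E → F} {a M : ℝ} (hf : DifferentiableOn ℂ f (ball 0 a))
    (hM : ∀ x ∈ ball (0 : E) a, ‖f x‖ ≤ M) (v : E) :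
    DifferentiableOn ℂ (fun x => fderiv ℂ f x v) (ball 0 a) := by
  intro x hx
  obtain ⟨c, hxc, hca⟩ := exists_between (mem_ball.1 hx)
  obtain ⟨b, hcb, hba⟩ := exists_between hca
  obtain ⟨C, hC⟩ := exists_cauchy_bounds (E := E) (F := F) hba M
  have hsub : ball (0 : E) b ⊆ ball 0 a := ball_subset_ball hba.le
  have hshift : ∀ᶠ t : ℂ in 𝓝[≠] 0, ∀ y ∈ ball (0 : E) c, y + t • v ∈ ball (0 : E) b := by
    have hcont : Tendsto (fun t : ℂ => ‖t • v‖) (𝓝 0) (𝓝 0) := by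
      have : ContinuousAt (fun t : ℂ => ‖t • v‖) 0 := by fun_prop
      simpa [ContinuousAt] using this
    filter_upwards [(hcont.eventually_lt_const (sub_pos.2 hcb)).filter_mono nhdsWithin_le_nhds]
      with t ht y hy
    rw [mem_ball_zero_iff] at *
    linarith [norm_add_le y (t • v)]
  let U : Ultrafilter ℂ := Ultrafilter.of (𝓝[≠] 0)
  have hU : (U : Filter ℂ) ≤ 𝓝[≠] 0 := Ultrafilter.of_le _
  refine (tendsto_fderiv_and_differentiableAt_of_ultrafilter U (a := c) (M := C * ‖v‖)
    (f := fun t y => t⁻¹ • (f (y + t • v) - f y)) ?_ ?_ ?_ hxc).2.differentiableWithinAt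
  · filter_upwards [hU hshift] with t ht
    refine ((hf.comp (by fun_prop) fun y hy => hsub (ht y hy)).sub
      (hf.mono (ball_subset_ball hca.le))).const_smul _
  · filter_upwards [hU hshift, hU self_mem_nhdsWithin] with t ht ht0 y hy
    have hmv := (convex_ball (0 : E) b).norm_image_sub_le_of_norm_fderiv_le
        (fun w hw => hf.differentiableAt (isOpen_ball.mem_nhds (hsub hw)))
        (fun w hw => (hC f hf hM w hw).1) (ball_subset_ball hcb.le hy) (ht y hy)
    have ht' : 0 < ‖t‖ := norm_pos_iff.2 ht0
    rw [add_sub_cancel_left, norm_smul] at hmv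
    rw [norm_smul, norm_inv, inv_mul_le_iff₀ ht']
    linarith
  · intro y hy
    have hy' := (hf.differentiableAt (isOpen_ball.mem_nhds
      (ball_subset_ball hca.le hy))).hasFDerivAt.hasLineDerivAt v
    exact hy'.tendsto_slope_zero.mono_left hU

theorem differentiableOn_det_fderiv [FiniteDimensional ℂ E]
    {f : E → E} {a M : ℝ} (hf : DifferentiableOn ℂ f (ball 0 a))
    (hM : ∀ x ∈ ball (0 : E) a, ‖f x‖ ≤ M) :
    DifferentiableOn ℂ (fun x => (fderiv ℂ f x).det) (ball 0 a) := by
  let B := Module.finBasis ℂ E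
  have hdet : ∀ x, (fderiv ℂ f x).det =
      (Matrix.of fun i j => B.coord i (fderiv ℂ f x (B j))).det := by
    intro x
    rw [ContinuousLinearMap.det, ← LinearMap.det_toMatrix B]
    congr 1
    ext i j
    simp [LinearMap.toMatrix_apply]
  simp only [hdet, Matrix.det_apply, Matrix.of_apply]
  refine DifferentiableOn.fun_sum fun σ _ => DifferentiableOn.fun_const_smul ?_ _
  intro x hx
  have hentry : ∀ i, DifferentiableAt ℂ (fun x => B.coord (σ i) (fderiv ℂ f x (B i))) x := fun i =>
    (LinearMap.toContinuousLinearMap (B.coord (σ i))).differentiableAt.comp x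
      ((differentiableOn_fderiv_apply hf hM (B i)).differentiableAt (isOpen_ball.mem_nhds hx))
  exact (HasFDerivAt.finsetProd fun i _ =>
    (hentry i).hasFDerivAt).differentiableAt.differentiableWithinAt

/-- Removing a countable set from an open disc leaves it connected. -/
theorem isPreconnected_ball_diff_countable {c : ℂ} {r : ℝ} (hr : 0 < r) {Z : Set ℂ}
    (hZ : Z.Countable) : IsPreconnected (ball c r \ Z) := by
  let φ := OpenPartialHomeomorph.univBall (E := ℂ) c r
  have hsource : φ.source = univ := OpenPartialHomeomorph.univBall_source c r
  have htarget : φ.target = ball c r := OpenPartialHomeomorph.univBall_target c hr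
  have hcount : (φ ⁻¹' Z).Countable :=
    hZ.preimage_of_injOn (φ.injOn.mono (by simp [hsource]))
  have himage : φ '' (φ ⁻¹' Z)ᶜ = ball c r \ Z := by
    rw [← htarget, ← φ.image_source_eq_target, hsource, ← preimage_compl,
      image_preimage_eq_inter_range, image_univ, sdiff_eq, inter_comm]
  rw [← himage]
  exact (hcount.isConnected_compl_of_one_lt_rank (by simp)).isPreconnected.image _
    (OpenPartialHomeomorph.continuous_univBall c r).continuousOn

/-- The zeros of a one-variable holomorphic function that is not identically zero on a disc do not
separate the disc: a real level of a norm that is crossed is crossed off the zeros. -/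
theorem exists_norm_eq_and_ne_zero {f : ℂ → F} {J : ℂ → ℂ} {ρ r : ℝ} {q : ℂ}
    (hf : DifferentiableOn ℂ f (ball 0 ρ)) (hJ : DifferentiableOn ℂ J (ball 0 ρ))
    (h0 : ‖f 0‖ < r) (hJ0 : J 0 ≠ 0) (hq : q ∈ ball (0 : ℂ) ρ) (hqr : r ≤ ‖f q‖) :
    ∃ w ∈ ball (0 : ℂ) ρ, ‖f w‖ = r ∧ J w ≠ 0 := by
  have hρ : 0 < ρ := pos_of_mem_ball hq
  have hpre : IsPreconnected (ball (0 : ℂ) ρ) := (convex_ball _ _).isPreconnected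
  obtain ⟨p, hp, hpr⟩ : ∃ p ∈ ball (0 : ℂ) ρ, r < ‖f p‖ := by
    by_contra! hcon
    have hmax : IsMaxOn (norm ∘ f) (ball 0 ρ) q := fun z hz => (hcon z hz).trans hqr
    have := Complex.norm_eqOn_of_isPreconnected_of_isMaxOn hpre isOpen_ball hf hq hmax
      (mem_ball_self hρ)
    simp only [Function.comp_apply, Function.const_apply] at this
    linarith
  set Z := ball (0 : ℂ) ρ ∩ {z | J z = 0} with hZdef
  have hZ : Z.Countable := by
    have hev := (hJ.analyticOnNhd isOpen_ball).eqOn_zero_or_eventually_ne_zero_of_preconnected hpre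
      |>.resolve_left fun h => hJ0 (h (mem_ball_self hρ))
    have hdisc : IsDiscrete Z := by
      have := isDiscrete_of_codiscreteWithin (s := {z | J z = 0}) (U := ball (0 : ℂ) ρ) hev
      rwa [inter_comm] at this
    exact (HereditarilyLindelofSpace.isLindelof Z).countable_of_isDiscrete hdisc
  have hdense : Dense Zᶜ := hZ.dense_compl ℂ
  have hopen : IsOpen (ball (0 : ℂ) ρ ∩ (fun z => ‖f z‖) ⁻¹' Ioi r) :=
    hf.continuousOn.norm.isOpen_inter_preimage isOpen_ball isOpen_Ioi
  obtain ⟨p', ⟨hp', hp'r⟩, hp'Z⟩ := hdense.inter_open_nonempty _ hopen ⟨p, hp, hpr⟩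
  have h0mem : (0 : ℂ) ∈ ball (0 : ℂ) ρ \ Z := ⟨mem_ball_self hρ, fun h => hJ0 h.2⟩
  obtain ⟨w, hw, hwr⟩ := (isPreconnected_ball_diff_countable (c := 0) hρ hZ).intermediate_value
    h0mem ⟨hp', hp'Z⟩ (hf.continuousOn.norm.mono sdiff_subset) ⟨h0.le, le_of_lt hp'r⟩
  exact ⟨w, hw.1, hwr, fun h => hw.2 ⟨hw.1, h⟩⟩

/-- The critical points of a nondegenerate holomorphic map do not contain a level set of its norm
which is crossed. -/
theorem exists_norm_eq_and_det_fderiv_ne_zero [FiniteDimensional ℂ E] {f : E → E} {a M r : ℝ}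
    {q : E} (hf : DifferentiableOn ℂ f (ball 0 a)) (hM : ∀ x ∈ ball (0 : E) a, ‖f x‖ ≤ M)
    (h0 : ‖f 0‖ < r) (hJ0 : (fderiv ℂ f 0).det ≠ 0) (hq : q ∈ ball (0 : E) a)
    (hqr : r ≤ ‖f q‖) : ∃ w ∈ ball (0 : E) a, ‖f w‖ = r ∧ (fderiv ℂ f w).det ≠ 0 := by
  have hq0 : 0 < ‖q‖ := norm_pos_iff.2 <| by
    rintro rfl
    linarith
  have hmaps : ∀ z ∈ ball (0 : ℂ) (a / ‖q‖), z • q ∈ ball (0 : E) a := fun z hz => by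
    rwa [mem_ball_zero_iff, lt_div_iff₀ hq0, ← norm_smul, ← mem_ball_zero_iff] at hz
  have hline : DifferentiableOn ℂ (fun z : ℂ => z • q) (ball 0 (a / ‖q‖)) := by fun_prop
  obtain ⟨w, hw, hwr, hwJ⟩ := exists_norm_eq_and_ne_zero (q := 1) (r := r)
    (hf.comp hline hmaps) ((differentiableOn_det_fderiv hf hM).comp hline hmaps)
    (by simpa using h0) (by simpa using hJ0)
    (by simpa [one_lt_div hq0] using hq) (by simpa using hqr)
  exact ⟨w • q, hmaps w hw, hwr, hwJ⟩

/-- Near a noncritical point of the limit, the images of the members of a convergent bounded family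
of holomorphic maps eventually contain a fixed ball. -/
theorem exists_eventually_closedBall_subset_image [FiniteDimensional ℂ E] [Nontrivial E]
    {ι : Type*} (U : Ultrafilter ι) {f : ι → E → E} {g : E → E} {a M : ℝ}
    (hd : ∀ᶠ i in (U : Filter ι), DifferentiableOn ℂ (f i) (ball 0 a))
    (hM : ∀ᶠ i in (U : Filter ι), ∀ x ∈ ball (0 : E) a, ‖f i x‖ ≤ M)
    (hg : ∀ x ∈ ball (0 : E) a, Tendsto (fun i => f i x) U (𝓝 (g x)))
    {w : E} (hw : w ∈ ball (0 : E) a) (hJ : (fderiv ℂ g w).det ≠ 0) :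
    ∃ ε > 0, ∀ᶠ i in (U : Filter ι), closedBall (g w) ε ⊆ f i '' ball 0 a := by
  obtain ⟨b, hwb, hba⟩ := exists_between (mem_ball.1 hw)
  obtain ⟨C, hC⟩ := exists_cauchy_bounds (E := E) (F := E) hba M
  have hC0 : 0 ≤ C := by
    obtain ⟨i, hi, hi'⟩ := (hd.and hM).exists
    exact (norm_nonneg _).trans (hC (f i) hi hi' w hwb).1
  let e := (fderiv ℂ g w).toContinuousLinearEquivOfDetNeZero hJ
  have he : (e : E →L[ℂ] E) = fderiv ℂ g w :=
    ContinuousLinearMap.coe_toContinuousLinearEquivOfDetNeZero _ _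
  have hN : 0 < ‖(e.symm : E →L[ℂ] E)‖₊ := e.nnnorm_symm_pos
  set c : NNReal := ‖(e.symm : E →L[ℂ] E)‖₊⁻¹ / 2 with hc
  have hc0 : 0 < (c : ℝ) := by positivity
  obtain ⟨δ, hδ0, hδb, hδC⟩ : ∃ δ > 0, closedBall w δ ⊆ ball (0 : E) b ∧ C * δ ≤ c / 2 := by
    refine ⟨min ((b - dist w 0) / 2) (c / 2 / (C + 1)), ?_, ?_, ?_⟩
    · have := sub_pos.2 hwb
      positivity
    · apply closedBall_subset_ball'
      linarith [min_le_left ((b - dist w 0) / 2) (c / 2 / (C + 1))]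
    · calc C * min ((b - dist w 0) / 2) (c / 2 / (C + 1)) ≤ (C + 1) * (c / 2 / (C + 1)) := by
            gcongr
            · linarith
            · exact min_le_right _ _
        _ = c / 2 := by field_simp
  refine ⟨c * δ / 2, by positivity, ?_⟩
  have hder := (tendsto_fderiv_and_differentiableAt_of_ultrafilter U hd hM hg hw).1
  filter_upwards [hd, hM, (tendsto_iff_norm_sub_tendsto_zero.1 hder).eventually_lt_const
    (half_pos hc0), (tendsto_iff_dist_tendsto_zero.1 (hg w hw)).eventually_lt_const
    (half_pos (mul_pos hc0 hδ0))] with i hi hi' hiL hig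
  have happrox : ApproximatesLinearOn (f i) (e : E →L[ℂ] E) (closedBall w δ) c := by
    intro x hx y hy
    refine (convex_closedBall w δ).norm_image_sub_le_of_norm_fderiv_le'
      (fun z hz => hi.differentiableAt (isOpen_ball.mem_nhds
        (ball_subset_ball hba.le (hδb hz)))) (fun z hz => ?_) hy hx
    rw [he]
    have h1 := (hC (f i) hi hi' w hwb).2 z (hδb hz)
    have h2 : C * ‖z - w‖ ≤ C * δ := by
      gcongr
      simpa [dist_eq_norm] using hz
    have h3 := norm_sub_le_norm_sub_add_norm_sub (fderiv ℂ (f i) z) (fderiv ℂ (f i) w)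
      (fderiv ℂ g w)
    linarith
  have hsurj := happrox.surjOn_closedBall_of_nonlinearRightInverse e.toNonlinearRightInverse
    hδ0.le le_rfl
  have hrad : (((e.toNonlinearRightInverse).nnnorm : ℝ)⁻¹ - c) * δ = c * δ := by
    have : (((e.toNonlinearRightInverse).nnnorm : ℝ)⁻¹) = 2 * c := by
      simp [hc, ContinuousLinearEquiv.toNonlinearRightInverse]
      ring
    rw [this]
    ring
  rw [hrad] at hsurj
  intro y hy
  have hy' : y ∈ closedBall (f i w) (c * δ) := by
    rw [mem_closedBall] at *
    linarith [dist_triangle y (g w) (f i w), dist_comm (f i w) (g w)]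
  obtain ⟨x, hx, rfl⟩ := hsurj hy'
  exact ⟨x, ball_subset_ball hba.le (hδb hx), rfl⟩

/-- Quantitative unavoidability: finitely many points of a sphere suffice to force every bounded
holomorphic map which is nondegenerate at the origin and omits them to send a smaller ball into the
ball bounded by the sphere. -/
theorem exists_finite_subset_sphere_forall_norm_le [FiniteDimensional ℂ E] [Nontrivial E]
    {a b r : ℝ} (hab : b < a) (hr : 0 < r) (M : ℝ) :
    ∃ T ⊆ sphere (0 : E) r, T.Finite ∧ ∀ f : E → E, DifferentiableOn ℂ f (ball 0 a) →
      (∀ x ∈ ball (0 : E) a, ‖f x‖ ≤ M) → ‖f 0‖ ≤ r / 2 → 1 ≤ ‖(fderiv ℂ f 0).det‖ →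
      Disjoint (f '' ball 0 a) T → ∀ x ∈ closedBall (0 : E) b, ‖f x‖ ≤ r := by
  have : ProperSpace E := FiniteDimensional.proper ℂ E
  by_contra! hcon
  have hnet : ∀ j : ℕ, ∃ T ⊆ sphere (0 : E) r, T.Finite ∧
      sphere (0 : E) r ⊆ ⋃ x ∈ T, ball x (1 / ((j : ℝ) + 1)) := fun j =>
    (isCompact_sphere (0 : E) r).finite_cover_balls Nat.one_div_pos_of_nat
  choose T hTs hTf hTc using hnet
  choose f hd hM h0 hJ hdisj q hq hqr using fun j => hcon (T j) (hTs j) (hTf j)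
  let U : Ultrafilter ℕ := hyperfilter ℕ
  have hlim : ∀ x ∈ ball (0 : E) a, ∃ y, Tendsto (fun j => f j x) U (𝓝 y) := by
    intro x hx
    obtain ⟨y, -, hy⟩ := (isCompact_closedBall (0 : E) M).ultrafilter_le_nhds
      (U.map fun j => f j x) (by
        rw [le_principal_iff, Ultrafilter.mem_coe, Ultrafilter.mem_map]
        exact Eventually.of_forall fun j => by simpa using hM j x hx)
    exact ⟨y, hy⟩
  choose! g hg using hlim
  obtain ⟨p, hp, hpq⟩ : ∃ p ∈ closedBall (0 : E) b, Tendsto q U (𝓝 p) :=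
    (isCompact_closedBall (0 : E) b).ultrafilter_le_nhds (U.map q) (by
      rw [le_principal_iff, Ultrafilter.mem_coe, Ultrafilter.mem_map]
      exact Eventually.of_forall hq)
  have hpa : p ∈ ball (0 : E) a := closedBall_subset_ball hab hp
  have ha : 0 < a := pos_of_mem_ball hpa
  have hder : ∀ x ∈ ball (0 : E) a, _ := fun x hx =>
    tendsto_fderiv_and_differentiableAt_of_ultrafilter U (Eventually.of_forall hd)
      (Eventually.of_forall hM) hg hx
  have hgd : DifferentiableOn ℂ g (ball 0 a) := fun x hx => (hder x hx).2.differentiableWithinAt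
  have hgM : ∀ x ∈ ball (0 : E) a, ‖g x‖ ≤ M := fun x hx =>
    le_of_tendsto (hg x hx).norm (Eventually.of_forall fun j => hM j x hx)
  have hg0 : ‖g 0‖ < r := by
    have : ‖g 0‖ ≤ r / 2 := le_of_tendsto (hg 0 (mem_ball_self ha)).norm (Eventually.of_forall h0)
    linarith
  have hgJ : (fderiv ℂ g 0).det ≠ 0 := by
    have hlim := ((ContinuousLinearMap.continuous_det.tendsto _).comp
      (hder 0 (mem_ball_self ha)).1).norm
    have : 1 ≤ ‖(fderiv ℂ g 0).det‖ := ge_of_tendsto hlim (Eventually.of_forall hJ)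
    exact norm_pos_iff.1 (by linarith)
  have hgp : r ≤ ‖g p‖ := by
    obtain ⟨d, hbd, hda⟩ := exists_between hab
    obtain ⟨C, hC⟩ := exists_cauchy_bounds (E := E) (F := E) hda M
    have hlip : ∀ j, ‖f j (q j) - f j p‖ ≤ C * ‖q j - p‖ := fun j =>
      (convex_ball (0 : E) d).norm_image_sub_le_of_norm_fderiv_le
        (fun w hw => (hd j).differentiableAt (isOpen_ball.mem_nhds
          (ball_subset_ball hda.le hw))) (fun w hw => (hC (f j) (hd j) (hM j) w hw).1)
        (closedBall_subset_ball hbd hp) (closedBall_subset_ball hbd (hq j))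
    have hlim : Tendsto (fun j => C * ‖q j - p‖ + ‖f j p‖) U (𝓝 (C * 0 + ‖g p‖)) :=
      ((tendsto_iff_norm_sub_tendsto_zero.1 hpq).const_mul C).add (hg p hpa).norm
    rw [mul_zero, zero_add] at hlim
    refine ge_of_tendsto hlim (Eventually.of_forall fun j => ?_)
    linarith [hlip j, hqr j, norm_sub_norm_le (f j (q j)) (f j p)]
  obtain ⟨w, hw, hwr, hwJ⟩ := exists_norm_eq_and_det_fderiv_ne_zero hgd hgM hg0 hgJ hpa hgp
  obtain ⟨ε, hε, hball⟩ := exists_eventually_closedBall_subset_image U (Eventually.of_forall hd)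
    (Eventually.of_forall hM) hg hw hwJ
  have hsmall : ∀ᶠ j : ℕ in (U : Filter ℕ), 1 / ((j : ℝ) + 1) < ε :=
    (tendsto_one_div_add_atTop_nhds_zero_nat.eventually_lt_const hε).filter_mono
      Nat.hyperfilter_le_atTop
  obtain ⟨j, hj, hjε⟩ := (hball.and hsmall).exists
  obtain ⟨y, hyT, hy⟩ := mem_iUnion₂.1 (hTc j (mem_sphere_zero_iff_norm.2 hwr))
  refine disjoint_left.1 (hdisj j) (hj ?_) hyT
  rw [mem_closedBall, dist_comm]
  exact (mem_ball.1 hy).le.trans hjε.le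

/-- A union of finite sets lying on spheres whose radii are distinct positive integers is closed. -/
theorem isClosed_iUnion_of_finite_subset_sphere {E : Type*} [NormedAddCommGroup E] {T : ℕ → Set E}
    (hT : ∀ k, T k ⊆ sphere (0 : E) (k + 1)) (hfin : ∀ k, (T k).Finite) :
    IsClosed (⋃ k, T k) := by
  refine LocallyFinite.isClosed_iUnion (fun x => ?_) fun k => (hfin k).isClosed
  refine ⟨ball x 1, ball_mem_nhds x one_pos, (finite_Iic ⌈‖x‖⌉₊).subset ?_⟩
  rintro k ⟨y, hyT, hy⟩
  have h1 : ‖y‖ = k + 1 := by simpa using hT k hyT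
  have h2 : ‖y - x‖ < 1 := by simpa [dist_eq_norm] using hy
  have h3 : (k : ℝ) ≤ ⌈‖x‖⌉₊ := by linarith [Nat.le_ceil ‖x‖, norm_sub_norm_le y x]
  exact_mod_cast h3

theorem discreteTopology_iUnion_of_finite_subset_sphere {E : Type*} [NormedAddCommGroup E]
    {T : ℕ → Set E}
    (hT : ∀ k, T k ⊆ sphere (0 : E) (k + 1)) (hfin : ∀ k, (T k).Finite) :
    DiscreteTopology (⋃ k, T k : Set E) := by
  refine discreteTopology_iff_forall_isClosed.2 fun S => ?_
  have hS : IsClosed (⋃ k, T k ∩ Subtype.val '' S) :=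
    isClosed_iUnion_of_finite_subset_sphere (fun k => inter_subset_left.trans (hT k))
      fun k => (hfin k).subset inter_subset_left
  convert hS.preimage continuous_subtype_val
  rw [← iUnion_inter]
  ext x
  simp

/-- In a nontrivial finite-dimensional complex normed space there is a closed discrete set which
meets the image of every entire self-map that is nondegenerate at some point. -/
theorem exists_unavoidable_discrete [FiniteDimensional ℂ E] [Nontrivial E] :
    ∃ D : Set E, IsClosed D ∧ DiscreteTopology D ∧ ∀ f : E → E, Differentiable ℂ f →
      (∃ x, Function.Bijective (fderiv ℂ f x)) → (range f ∩ D).Nonempty := by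
  have : ProperSpace E := FiniteDimensional.proper ℂ E
  let a : ℕ → ℝ := fun k => 2 - 1 / ((k : ℝ) + 1)
  have ha : ∀ k, a k < a (k + 1) := fun k => by
    have := Nat.one_div_lt_one_div (α := ℝ) (Nat.lt_succ_self k)
    simp only [a]
    linarith
  have ha1 : ∀ k, 1 ≤ a k := fun k => by
    have : 1 / ((k : ℝ) + 1) ≤ 1 := by
      rw [div_le_one (by positivity)]
      linarith [k.cast_nonneg (α := ℝ)]
    simp only [a]
    linarith
  have ha2 : ∀ k, a k ≤ 2 := fun k => by
    have : 0 < 1 / ((k : ℝ) + 1) := by positivity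
    simp only [a]
    linarith
  choose T hTs hTf hT using fun k : ℕ => exists_finite_subset_sphere_forall_norm_le (E := E) (ha k)
    (r := k + 1) (by positivity) ((k + 1 : ℕ) + 1)
  refine ⟨⋃ k, T k, isClosed_iUnion_of_finite_subset_sphere hTs hTf,
    discreteTopology_iUnion_of_finite_subset_sphere hTs hTf, fun f hf ⟨x₀, hx₀⟩ => ?_⟩
  by_contra hempty
  rw [not_nonempty_iff_eq_empty, ← disjoint_iff_inter_eq_empty] at hempty
  have hdet : (fderiv ℂ f x₀).det ≠ 0 :=
    (LinearEquiv.ofBijective (fderiv ℂ f x₀ : E →ₗ[ℂ] E) hx₀).isUnit_det'.ne_zero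
  obtain ⟨m, hm⟩ := exists_nat_ge (2 * ‖f x₀‖)
  obtain ⟨R₀, hR₀⟩ := exists_nat_ge (1 / ‖(fderiv ℂ f x₀).det‖)
  have hscale : ∀ R : ℝ, 1 ≤ R → R₀ ≤ R → ∀ z ∈ closedBall (0 : E) 1,
      ‖f (x₀ + (R : ℂ) • z)‖ ≤ m + 1 := by
    intro R hR1 hR z hz
    let g : E → E := fun z => f (x₀ + (R : ℂ) • z)
    have hgd : Differentiable ℂ g := by fun_prop
    have hgder : fderiv ℂ g 0 = (R : ℂ) • fderiv ℂ f x₀ := by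
      have h1 : HasFDerivAt (fun z : E => x₀ + (R : ℂ) • z)
          ((R : ℂ) • ContinuousLinearMap.id ℂ E) 0 :=
        ((hasFDerivAt_id (0 : E)).const_smul (R : ℂ)).const_add x₀
      have h2 : HasFDerivAt f (fderiv ℂ f x₀) (x₀ + (R : ℂ) • (0 : E)) := by
        simpa using (hf x₀).hasFDerivAt
      refine (h2.comp (0 : E) h1).fderiv.trans ?_
      ext v
      simp
    have hgdet : 1 ≤ ‖(fderiv ℂ g 0).det‖ := by
      have hfin : Module.finrank ℂ E ≠ 0 := Module.finrank_pos.ne'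
      have hpos : 0 < ‖(fderiv ℂ f x₀).det‖ := norm_pos_iff.2 hdet
      rw [hgder, ContinuousLinearMap.det, ContinuousLinearMap.toLinearMap_smul, LinearMap.det_smul,
        norm_mul, norm_pow, Complex.norm_real, Real.norm_of_nonneg (by linarith)]
      have hRd : 1 ≤ R * ‖(fderiv ℂ f x₀).det‖ := (div_le_iff₀ hpos).1 (hR₀.trans hR)
      exact hRd.trans (by gcongr; exact le_self_pow₀ hR1 hfin)
    obtain ⟨K, hK⟩ : ∃ K : ℕ, ∀ x ∈ closedBall (0 : E) 2, ‖g x‖ ≤ K := by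
      obtain ⟨B, hB⟩ := (isCompact_closedBall (0 : E) 2).exists_bound_of_continuousOn
        hgd.continuous.continuousOn
      obtain ⟨K, hK⟩ := exists_nat_ge B
      exact ⟨K, fun x hx => (hB x hx).trans hK⟩
    have hdescend : ∀ j, ∀ k, m ≤ k → K ≤ k + j → ∀ x ∈ closedBall (0 : E) (a k),
        ‖g x‖ ≤ k + 1 := by
      intro j
      induction j with
      | zero =>
        intro k _ hKk x hx
        have : (K : ℝ) ≤ k := by exact_mod_cast hKk
        linarith [hK x (closedBall_subset_closedBall (ha2 k) hx)]
      | succ j ih =>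
        intro k hk hKk
        refine hT k g hgd.differentiableOn
          (fun x hx => ih (k + 1) (by lia) (by lia) x (ball_subset_closedBall hx)) ?_ hgdet ?_
        · have : (m : ℝ) ≤ k := by exact_mod_cast hk
          simp only [g, smul_zero, add_zero]
          linarith
        · refine hempty.mono ?_ (subset_iUnion T k)
          rintro _ ⟨x, -, rfl⟩
          exact mem_range_self _
    exact hdescend K m le_rfl (by lia) z (closedBall_subset_closedBall (ha1 m) hz)
  have hbdd : Bornology.IsBounded (range f) := by
    refine isBounded_iff_forall_norm_le.2 ⟨m + 1, ?_⟩
    rintro _ ⟨y, rfl⟩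
    set R : ℝ := max (max 1 R₀) ‖y - x₀‖ with hR
    have hR1 : 1 ≤ R := (le_max_left _ _).trans (le_max_left _ _)
    have hR0 : (R : ℂ) ≠ 0 := by exact_mod_cast (by linarith : R ≠ 0)
    have := hscale R hR1 ((le_max_right _ _).trans (le_max_left _ _)) ((R : ℂ)⁻¹ • (y - x₀)) (by
      rw [mem_closedBall_zero_iff, norm_smul, norm_inv, Complex.norm_real,
        Real.norm_of_nonneg (by linarith), inv_mul_le_iff₀ (by linarith), mul_one]
      exact le_max_right _ _)
    rwa [smul_inv_smul₀ hR0, add_sub_cancel] at this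
  obtain ⟨c, hc⟩ := hf.exists_eq_const_of_bounded hbdd
  refine hdet ?_
  rw [hc, fderiv_const, ContinuousLinearMap.det]
  simp

end UnavoidableSets

/-- For every integer `n ≥ 1` there exists a discrete subset `D` of `ℂⁿ` such that for every
nondegenerate holomorphic map `F : ℂⁿ → ℂⁿ` (i.e. whose derivative is invertible at some point)
the image `F(ℂⁿ)` has non-empty intersection with `D`. -/
theorem stmt_1 (n : ℕ) (hn : 1 ≤ n) :
    ∃ D : Set (EuclideanSpace ℂ (Fin n)),
      IsClosed D ∧ DiscreteTopology D ∧
      ∀ F : EuclideanSpace ℂ (Fin n) → EuclideanSpace ℂ (Fin n),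
        Differentiable ℂ F →
        (∃ x, Function.Bijective (fderiv ℂ F x)) →
        (Set.range F ∩ D).Nonempty := by
  have : Nonempty (Fin n) := ⟨⟨0, hn⟩⟩
  exact exists_unavoidable_discrete
end

section
/- For every integer n ≥ 1 there exists an uncountable family of infinite discrete subsets of ℂⁿ that are pairwise inequivalent, i.e. an uncountable index set I and infinite discrete subsets D_i ⊆ ℂⁿ for i ∈ I such that for all i ≠ j in I there is no automorphism φ of ℂⁿ with φ(D_i) = D_j. -/
open Metric Set Filter Topology

section CauchyEstimates

variable {E : Type*} [NormedAddCommGroup E] [NormedSpace ℂ E] {f : E → E}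

/-- Cauchy's estimate for the derivative of a holomorphic map bounded on a ball. -/
theorem norm_fderiv_le_of_norm_le_on_ball (hf : Differentiable ℂ f) {c : E} {r B : ℝ} (hr : 0 < r)
    (hB : ∀ z ∈ ball c r, ‖f z‖ ≤ B) : ‖fderiv ℂ f c‖ ≤ 2 * B / r := by
  refine Complex.norm_fderiv_le_div_of_mapsTo_ball hf.differentiableOn (fun z hz => ?_) hr
  rw [mem_closedBall, dist_eq_norm]
  linarith [norm_sub_le (f z) (f c), hB z hz, hB c (mem_ball_self hr)]

/-- The first order Taylor remainder of a holomorphic map bounded on a ball. -/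
theorem norm_taylor_remainder_le (hf : Differentiable ℂ f) {c : E} {r B : ℝ}
    (hB : ∀ z ∈ ball c r, ‖f z‖ ≤ B) {w : E} (hw : w ∈ ball c r) :
    ‖f w - f c - fderiv ℂ f c (w - c)‖ ≤ 4 * B * (‖w - c‖ / r) ^ 2 := by
  have hr : 0 < r := nonempty_ball.mp ⟨w, hw⟩
  have hfd := norm_fderiv_le_of_norm_le_on_ball hf hr hB
  set A := fderiv ℂ f c with hA
  have key := Complex.dist_le_mul_div_pow_of_mapsTo_ball_of_isLittleO (f := fun z => f z - A z)
    (c := c) (z := w) (R₁ := r) (R₂ := 4 * B) (n := 1) (by fun_prop) (fun z hz => ?_) ?_ hw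
  · rw [dist_eq_norm, dist_eq_norm] at key
    rwa [show f w - f c - A (w - c) = f w - A w - (f c - A c) by rw [map_sub]; abel]
  · rw [mem_closedBall, dist_eq_norm]
    have h1 : ‖A (z - c)‖ ≤ 2 * B := by
      calc ‖A (z - c)‖ ≤ ‖A‖ * ‖z - c‖ := A.le_opNorm _
        _ ≤ 2 * B / r * r := by
          gcongr
          · exact (norm_nonneg _).trans hfd
          · exact (mem_ball_iff_norm.mp hz).le
        _ = 2 * B := by field_simp
    have h2 : f z - A z - (f c - A c) = (f z - f c) - A (z - c) := by rw [map_sub]; abel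
    rw [h2]
    linarith [norm_sub_le (f z - f c) (A (z - c)), norm_sub_le (f z) (f c), hB z hz,
      hB c (mem_ball_self hr)]
  · have h := (hf c).hasFDerivAt.isLittleO
    rw [← hA] at h
    refine (h.congr_left fun z => ?_).trans_isBigO ?_
    · rw [map_sub]; abel
    · simpa using (Asymptotics.isBigO_refl (fun z => z - c) (𝓝 c)).norm_right

/-- Subtracting its derivative at the centre, a bounded holomorphic map has a small Lipschitz
constant on small balls. -/
theorem approximatesLinearOn_fderiv_closedBall (hf : Differentiable ℂ f) {c : E} {r B ρ : ℝ}
    (hρ : 0 < ρ) (hρr : 4 * ρ ≤ r) (hB : ∀ z ∈ ball c r, ‖f z‖ ≤ B) {K : NNReal}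
    (hK : 32 * B * ρ / r ^ 2 ≤ K) :
    ApproximatesLinearOn f (fderiv ℂ f c) (closedBall c ρ) K := by
  have hr : 0 < r := by linarith
  have hB0 : 0 ≤ B := (norm_nonneg _).trans (hB c (mem_ball_self hr))
  set A := fderiv ℂ f c with hA
  have hg : Differentiable ℂ fun z => f z - f c - A (z - c) := by fun_prop
  have hderiv : ∀ x ∈ closedBall c ρ, ‖fderiv ℂ (fun z => f z - f c - A (z - c)) x‖ ≤ K := by
    intro x hx
    refine (norm_fderiv_le_of_norm_le_on_ball hg hρ (B := 4 * B * (2 * ρ / r) ^ 2)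
      fun z hz => ?_).trans (le_trans (le_of_eq ?_) hK)
    · have hzc : ‖z - c‖ ≤ 2 * ρ := by
        rw [mem_ball_iff_norm] at hz
        rw [mem_closedBall_iff_norm] at hx
        linarith [sub_add_sub_cancel z x c ▸ norm_add_le (z - x) (x - c)]
      refine (norm_taylor_remainder_le hf hB ?_).trans ?_
      · rw [mem_ball_iff_norm]; linarith
      · gcongr
    · field_simp; ring
  intro x hx y hy
  have := (convex_closedBall c ρ).norm_image_sub_le_of_norm_fderiv_le
    (fun z _ => hg z) hderiv hy hx
  convert this using 2
  simp only [map_sub]; abel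

end CauchyEstimates

section Jacobian

variable {E : Type*} [NormedAddCommGroup E] [NormedSpace ℂ E] [FiniteDimensional ℂ E] {f : E → E}

/-- Directional derivatives of a holomorphic map are holomorphic along complex lines. -/
theorem differentiable_fderiv_smul_apply_s2 (hf : Differentiable ℂ f) (z v : E) :
    Differentiable ℂ fun t : ℂ => fderiv ℂ f (t • z) v := by
  have : ProperSpace E := FiniteDimensional.proper ℂ E
  rw [← differentiableOn_univ]
  refine TendstoLocallyUniformlyOn.differentiableOn (φ := atTop)
    (F := fun (N : ℕ) (t : ℂ) => ((N : ℂ) + 1) • (f (t • z + ((N : ℂ) + 1)⁻¹ • v) - f (t • z)))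
    ?_ (Eventually.of_forall fun N => by fun_prop) isOpen_univ
  rw [tendstoLocallyUniformlyOn_iff_forall_isCompact isOpen_univ]
  intro K _ hK
  obtain ⟨S, hS⟩ := hK.isBounded.exists_norm_le
  set r : ℝ := ‖v‖ + 1
  have hr : 0 < r := by positivity
  obtain ⟨B, hB⟩ := (isCompact_closedBall (0 : E) (S * ‖z‖ + r)).exists_bound_of_continuousOn
    hf.continuous.continuousOn
  rw [Metric.tendstoUniformlyOn_iff]
  intro ε hε
  have hlim : Tendsto (fun N : ℕ => 4 * B * (‖v‖ / r) ^ 2 * (1 / ((N : ℝ) + 1))) atTop (𝓝 0) := by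
    rw [← mul_zero (4 * B * (‖v‖ / r) ^ 2)]
    exact tendsto_one_div_add_atTop_nhds_zero_nat.const_mul _
  filter_upwards [hlim.eventually_lt_const hε] with N hN t ht
  refine lt_of_le_of_lt ?_ hN
  have hN0 : (0 : ℝ) < (N : ℝ) + 1 := by positivity
  have hNc : ((N : ℂ) + 1) ≠ 0 := by exact_mod_cast hN0.ne'
  have hnorm : ‖(N : ℂ) + 1‖ = (N : ℝ) + 1 := by
    rw [← Nat.cast_succ, Complex.norm_natCast]; push_cast; ring
  have hball : ∀ w ∈ ball (t • z) r, ‖f w‖ ≤ B := fun w hw => hB w <| by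
    rw [mem_closedBall_zero_iff]
    rw [mem_ball_iff_norm] at hw
    have h1 : ‖t • z‖ ≤ S * ‖z‖ := by
      rw [norm_smul]; exact mul_le_mul_of_nonneg_right (hS t ht) (norm_nonneg _)
    have h2 := norm_add_le (w - t • z) (t • z)
    rw [sub_add_cancel] at h2
    linarith
  have hnv : ‖((N : ℂ) + 1)⁻¹ • v‖ = ‖v‖ / ((N : ℝ) + 1) := by
    rw [norm_smul, norm_inv, hnorm]; field_simp
  have hmem : t • z + ((N : ℂ) + 1)⁻¹ • v ∈ ball (t • z) r := by
    rw [mem_ball_iff_norm, add_sub_cancel_left, hnv]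
    exact (div_le_self (norm_nonneg v) (by linarith [N.cast_nonneg (α := ℝ)])).trans_lt
      (lt_add_one _)
  have key := norm_taylor_remainder_le hf hball hmem
  rw [add_sub_cancel_left, hnv] at key
  rw [dist_comm, dist_eq_norm]
  have h3 : ((N : ℂ) + 1) • (f (t • z + ((N : ℂ) + 1)⁻¹ • v) - f (t • z)) - fderiv ℂ f (t • z) v
      = ((N : ℂ) + 1) • (f (t • z + ((N : ℂ) + 1)⁻¹ • v) - f (t • z)
        - fderiv ℂ f (t • z) (((N : ℂ) + 1)⁻¹ • v)) := by
    rw [map_smul, smul_sub _ _ (((N : ℂ) + 1)⁻¹ • _), smul_inv_smul₀ hNc]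
  rw [h3, norm_smul, hnorm]
  calc ((N : ℝ) + 1) * _ ≤ ((N : ℝ) + 1) * (4 * B * (‖v‖ / (N + 1) / r) ^ 2) := by gcongr
    _ = _ := by field_simp

/-- The Jacobian determinant of a holomorphic map is holomorphic along complex lines. -/
theorem differentiable_det_fderiv_smul_s2 (hf : Differentiable ℂ f) (z : E) :
    Differentiable ℂ fun t : ℂ => (fderiv ℂ f (t • z)).det := by
  have b := Module.finBasis ℂ E
  have hentry (i j) : Differentiable ℂ fun t : ℂ => b.repr (fderiv ℂ f (t • z) (b j)) i :=
    ((LinearMap.toContinuousLinearMap (b.coord i)).differentiable).comp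
      (differentiable_fderiv_smul_apply_s2 hf z (b j))
  have : (fun t : ℂ => (fderiv ℂ f (t • z)).det) = fun t : ℂ =>
      (LinearMap.toMatrix b b (fderiv ℂ f (t • z) : E →ₗ[ℂ] E)).det := by
    funext t
    rw [LinearMap.det_toMatrix]
  rw [this]
  simp only [Matrix.det_apply, LinearMap.toMatrix_apply]
  refine Differentiable.fun_sum fun σ _ => Differentiable.const_smul ?_ _
  exact Differentiable.fun_finsetProd fun i _ => hentry _ _

end Jacobian

/-- An entire function which is small on a fixed arc of the unit circle and bounded on the circle is
small at the centre. -/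
theorem exists_pow_norm_apply_zero_le {τ : ℝ} (hτ : 0 < τ) :
    ∃ m : ℕ, ∀ (g : ℂ → ℂ) (M η : ℝ), Differentiable ℂ g → 1 ≤ M →
      (∀ t, ‖t‖ = 1 → ‖g t‖ ≤ M) → (∀ t, ‖t‖ = 1 → ‖t - 1‖ < τ → ‖g t‖ ≤ η) →
      ‖g 0‖ ^ m ≤ η * M ^ m := by
  obtain ⟨T, hTs, hTf, hT⟩ := (isCompact_sphere (0 : ℂ) 1).finite_cover_balls hτ
  lift T to Finset ℂ using hTf
  refine ⟨T.card, fun g M η hg hM hgM hgη => ?_⟩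
  have hP : Differentiable ℂ fun t => ∏ ω ∈ T, g (t * ω) :=
    Differentiable.fun_finsetProd fun ω _ => hg.comp (by fun_prop)
  have hη0 : 0 ≤ η := (norm_nonneg _).trans (hgη 1 (by simp) (by simpa using hτ))
  have := Complex.norm_le_of_forall_mem_frontier_norm_le (U := ball (0 : ℂ) 1) isBounded_ball
    hP.diffContOnCl (C := η * M ^ T.card) (fun t ht => ?_) (subset_closure (mem_ball_self one_pos))
  · simpa using this
  · rw [frontier_ball _ one_ne_zero, mem_sphere_zero_iff_norm] at ht
    have ht0 : t ≠ 0 := by rintro rfl; simp at ht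
    have hinv : t⁻¹ ∈ sphere (0 : ℂ) 1 := by simp [ht]
    obtain ⟨ω, hω, hωt⟩ := mem_iUnion₂.mp (hT hinv)
    have hnorm : ∀ ω ∈ T, ‖t * ω‖ = 1 := fun ω hω => by
      rw [norm_mul, ht, mem_sphere_zero_iff_norm.mp (hTs hω), one_mul]
    have hω' : ω ∈ T := hω
    rw [norm_prod, ← Finset.mul_prod_erase T _ hω']
    refine mul_le_mul (hgη _ (hnorm ω hω') ?_) ?_ (by positivity) hη0
    · rw [mem_ball, dist_comm, dist_eq_norm] at hωt
      calc ‖t * ω - 1‖ = ‖t * (ω - t⁻¹)‖ := by rw [mul_sub, mul_inv_cancel₀ ht0]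
        _ < τ := by rwa [norm_mul, ht, one_mul]
    · calc ∏ x ∈ T.erase ω, ‖g (t * x)‖ ≤ ∏ _x ∈ T.erase ω, M :=
            Finset.prod_le_prod (fun _ _ => norm_nonneg _) fun x hx =>
              hgM _ (hnorm x (Finset.mem_of_mem_erase hx))
        _ = M ^ (T.erase ω).card := Finset.prod_const M
        _ ≤ M ^ T.card := pow_le_pow_right₀ hM (Finset.card_le_card (Finset.erase_subset _ _))

section QuantitativeInverse

variable {E : Type*} [NormedAddCommGroup E] [NormedSpace ℂ E] [FiniteDimensional ℂ E]

/-- Linear endomorphisms of bounded norm whose determinants are bounded away from zero have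
uniformly bounded inverses. -/
theorem exists_norm_symm_le_of_le_norm_det (L : ℝ) {η : ℝ} (hη : 0 < η) :
    ∃ C > 0, ∀ A : E →L[ℂ] E, ‖A‖ ≤ L → η ≤ ‖A.det‖ →
      ∃ e : E ≃L[ℂ] E, (e : E →L[ℂ] E) = A ∧ ‖(e.symm : E →L[ℂ] E)‖ ≤ C := by
  have : ProperSpace (E →L[ℂ] E) := FiniteDimensional.proper ℂ _
  have : CompleteSpace E := FiniteDimensional.complete ℂ E
  have hequiv (A : E →L[ℂ] E) (hA : η ≤ ‖A.det‖) : ∃ e : E ≃L[ℂ] E, (e : E →L[ℂ] E) = A := by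
    have hdet : A.det ≠ 0 := norm_pos_iff.mp (hη.trans_le hA)
    exact ⟨A.toContinuousLinearEquivOfDetNeZero hdet, by ext; simp⟩
  have hcompact : IsCompact (closedBall (0 : E →L[ℂ] E) L ∩ {A | η ≤ ‖A.det‖}) :=
    (isCompact_closedBall _ _).inter_right
      (isClosed_le continuous_const ContinuousLinearMap.continuous_det.norm)
  have hcont : ContinuousOn Ring.inverse (closedBall (0 : E →L[ℂ] E) L ∩ {A | η ≤ ‖A.det‖}) := by
    rintro A ⟨-, hA⟩
    obtain ⟨e, rfl⟩ := hequiv A hA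
    exact (NormedRing.inverse_continuousAt e.toUnit).continuousWithinAt
  obtain ⟨C, hC⟩ := hcompact.exists_bound_of_continuousOn hcont
  refine ⟨max C 1, by positivity, fun A hAL hA => ?_⟩
  obtain ⟨e, rfl⟩ := hequiv A hA
  refine ⟨e, rfl, le_max_of_le_left ?_⟩
  have := hC e ⟨by simpa using hAL, hA⟩
  have hinv : Ring.inverse (e : E →L[ℂ] E) = (e.symm : E →L[ℂ] E) := Ring.inverse_unit e.toUnit
  rwa [hinv] at this

/-- The image of a ball under a bounded holomorphic map with Jacobian bounded away from zero at the
centre contains a ball of radius depending only on the bounds. -/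
theorem exists_closedBall_subset_image_ball [Nontrivial E] {r B η : ℝ} (hr : 0 < r) (hB : 0 < B)
    (hη : 0 < η) :
    ∃ ε > 0, ∀ (f : E → E) (c : E), Differentiable ℂ f → (∀ z ∈ ball c r, ‖f z‖ ≤ B) →
      η ≤ ‖(fderiv ℂ f c).det‖ → closedBall (f c) ε ⊆ f '' ball c r := by
  have : CompleteSpace E := FiniteDimensional.complete ℂ E
  obtain ⟨C, hC, hinv⟩ := exists_norm_symm_le_of_le_norm_det (E := E) (2 * B / r) hη
  set ρ : ℝ := min (r / 4) (r ^ 2 / (64 * B * C))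
  have hρ : 0 < ρ := by positivity
  have hρ1 : 4 * ρ ≤ r := by linarith [min_le_left (r / 4) (r ^ 2 / (64 * B * C))]
  have hρ2 : 32 * B * ρ / r ^ 2 ≤ (2 * C)⁻¹ := by
    calc 32 * B * ρ / r ^ 2 ≤ 32 * B * (r ^ 2 / (64 * B * C)) / r ^ 2 := by
          gcongr; exact min_le_right _ _
      _ = (2 * C)⁻¹ := by field_simp; norm_num
  refine ⟨(2 * C)⁻¹ * ρ, by positivity, fun f c hf hfB hdet => ?_⟩
  obtain ⟨e, he, hesymm⟩ := hinv _ (norm_fderiv_le_of_norm_le_on_ball hf hr hfB) hdet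
  have happrox := approximatesLinearOn_fderiv_closedBall hf hρ hρ1 hfB
    (K := ⟨(2 * C)⁻¹, by positivity⟩) hρ2
  rw [← he] at happrox
  have hsurj := happrox.surjOn_closedBall_of_nonlinearRightInverse e.toNonlinearRightInverse hρ.le
    Subset.rfl
  have hpos : 0 < ‖(e.symm : E →L[ℂ] E)‖ := e.norm_symm_pos
  refine (closedBall_subset_closedBall ?_).trans (hsurj.trans (image_mono ?_))
  · refine mul_le_mul_of_nonneg_right ?_ hρ.le
    have h1 : C⁻¹ ≤ ‖(e.symm : E →L[ℂ] E)‖⁻¹ := inv_anti₀ hpos hesymm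
    have h2 : (2 * C)⁻¹ = C⁻¹ - (2 * C)⁻¹ := by field_simp; norm_num
    exact h2.trans_le (sub_le_sub_right h1 _)
  · exact closedBall_subset_ball (by linarith)

/-- A holomorphic map that is bounded on a ball and nondegenerate at the origin has in its image a
ball of controlled radius centred near the value at any prescribed point well inside the ball. -/
theorem exists_closedBall_subset_image_near [Nontrivial E] {S B d η : ℝ} (hS : 0 < S) (hB : 0 < B)
    (hd : 0 < d) (hη : 0 < η) :
    ∃ ε > 0, ∀ (f : E → E) (z₀ : E), Differentiable ℂ f → ‖z₀‖ ≤ S →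
      (∀ z ∈ ball (0 : E) (‖z₀‖ + d), ‖f z‖ ≤ B) → η ≤ ‖(fderiv ℂ f 0).det‖ →
      ∃ w, ‖w - f z₀‖ ≤ 1 / 2 ∧ ‖w‖ ≤ B ∧ closedBall w ε ⊆ f '' ball 0 (‖z₀‖ + d) := by
  have : ProperSpace (E →L[ℂ] E) := FiniteDimensional.proper ℂ _
  set L : ℝ := 2 * B / d
  have hL : 0 < L := by positivity
  obtain ⟨m, hm⟩ := exists_pow_norm_apply_zero_le (τ := 1 / (2 * L * S)) (by positivity)
  obtain ⟨M, hM⟩ := (isCompact_closedBall (0 : E →L[ℂ] E) L).exists_bound_of_continuousOn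
    ContinuousLinearMap.continuous_det.continuousOn
  set M' : ℝ := max M 1
  have hM' : 1 ≤ M' := le_max_right _ _
  set η' : ℝ := η ^ m / M' ^ m / 2
  obtain ⟨ε, hε, himage⟩ := exists_closedBall_subset_image_ball (E := E) hd hB
    (show 0 < η' by positivity)
  refine ⟨ε, hε, fun f z₀ hf hz₀ hfB hdet => ?_⟩
  have hsub : ∀ c ∈ closedBall (0 : E) ‖z₀‖, ball c d ⊆ ball 0 (‖z₀‖ + d) := fun c hc =>
    ball_subset_ball' (by linarith [mem_closedBall.mp hc])
  have hderiv : ∀ c ∈ closedBall (0 : E) ‖z₀‖, ‖fderiv ℂ f c‖ ≤ L := fun c hc =>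
    norm_fderiv_le_of_norm_le_on_ball hf hd fun z hz => hfB z (hsub c hc hz)
  have hmem : ∀ t : ℂ, ‖t‖ = 1 → t • z₀ ∈ closedBall (0 : E) ‖z₀‖ := fun t ht => by
    rw [mem_closedBall_zero_iff, norm_smul, ht, one_mul]
  obtain ⟨t, ht, htτ, hdt⟩ : ∃ t : ℂ, ‖t‖ = 1 ∧ ‖t - 1‖ < 1 / (2 * L * S) ∧
      η' ≤ ‖(fderiv ℂ f (t • z₀)).det‖ := by
    by_contra! hcon
    have hpow := hm (fun t => (fderiv ℂ f (t • z₀)).det) M' η'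
      (differentiable_det_fderiv_smul_s2 hf z₀) hM'
      (fun t ht => le_max_of_le_left (hM _ (by simpa using hderiv _ (hmem t ht))))
      fun t ht htτ => (hcon t ht htτ).le
    simp only [zero_smul] at hpow
    have h1 : η ^ m ≤ η' * M' ^ m := (pow_le_pow_left₀ hη.le hdet m).trans hpow
    have h2 : η' * M' ^ m = η ^ m / 2 := by simp only [η']; field_simp
    have h3 : 0 < η ^ m := by positivity
    linarith
  have hz₁ := hmem t ht
  refine ⟨f (t • z₀), ?_, hfB _ (hsub _ hz₁ (mem_ball_self hd)),
    (himage f _ hf (fun z hz => hfB z (hsub _ hz₁ hz)) hdt).trans (image_mono (hsub _ hz₁))⟩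
  have hlip := (convex_closedBall (0 : E) ‖z₀‖).norm_image_sub_le_of_norm_fderiv_le
    (fun z _ => hf z) hderiv (by simp : z₀ ∈ closedBall (0 : E) ‖z₀‖) hz₁
  calc ‖f (t • z₀) - f z₀‖ ≤ L * ‖t • z₀ - z₀‖ := hlip
    _ = L * (‖t - 1‖ * ‖z₀‖) := by rw [← norm_smul, sub_smul, one_smul]
    _ ≤ L * (1 / (2 * L * S) * S) := by gcongr
    _ = 1 / 2 := by field_simp

end QuantitativeInverse

section Growth

variable {E : Type*} [NormedAddCommGroup E] [NormedSpace ℂ E] [Nontrivial E] [ProperSpace E]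

/-- A continuous surjection of `E` has, for infinitely many `k`, a definite gap between the largest
balls mapped into the balls of radius `k` and `k + 1`. -/
theorem exists_regular_growth {f : E → E} (hf : Continuous f) (hsurj : Function.Surjective f)
    (k₀ : ℕ) :
    ∃ k ≥ k₀, ∃ z₀ : E, (k : ℝ) ≤ ‖f z₀‖ ∧ (∀ z ∈ ball (0 : E) ‖z₀‖, ‖f z‖ ≤ k) ∧
      ∀ z ∈ ball (0 : E) (‖z₀‖ + (1 / 2) ^ k), ‖f z‖ ≤ k + 1 := by
  have hfirst (k : ℕ) : ∃ z₀ : E, (k : ℝ) ≤ ‖f z₀‖ ∧ ∀ z ∈ ball (0 : E) ‖z₀‖, ‖f z‖ ≤ k := by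
    obtain ⟨w, hw⟩ := NormedSpace.exists_lt_norm ℂ E k
    obtain ⟨z, rfl⟩ := hsurj w
    obtain ⟨z₀, hz₀, hdist⟩ := (isClosed_le continuous_const hf.norm :
      IsClosed {z | (k : ℝ) ≤ ‖f z‖}).exists_infDist_eq_dist ⟨z, hw.le⟩ 0
    refine ⟨z₀, hz₀, fun z hz => ?_⟩
    by_contra! hlt
    have := infDist_le_dist_of_mem (x := (0 : E)) (show z ∈ {z | (k : ℝ) ≤ ‖f z‖} from hlt.le)
    rw [hdist, dist_zero_left, dist_zero_left] at this
    exact absurd (mem_ball_zero_iff.mp hz) this.not_gt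
  choose z hkz hz using hfirst
  by_contra! hcon
  have hstep (k : ℕ) (hk : k₀ ≤ k) : ‖z (k + 1)‖ < ‖z k‖ + (1 / 2) ^ k := by
    obtain ⟨w, hw, hfw⟩ := hcon k hk (z k) (hkz k) (hz k)
    by_contra! hle
    have := hz (k + 1) w (ball_subset_ball hle hw)
    push_cast at this
    linarith
  have hbound (j : ℕ) : ‖z (k₀ + j)‖ ≤ ‖z k₀‖ + 2 - 2 * (1 / 2) ^ j := by
    induction j with
    | zero => simp
    | succ j ih =>
      have h1 := hstep (k₀ + j) (Nat.le_add_right _ _)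
      have h2 : ((1 : ℝ) / 2) ^ (k₀ + j) ≤ (1 / 2) ^ j :=
        pow_le_pow_of_le_one (by norm_num) (by norm_num) (Nat.le_add_left _ _)
      rw [← add_assoc, pow_succ]
      linarith
  obtain ⟨C, hC⟩ := (isCompact_closedBall (0 : E) (‖z k₀‖ + 2)).exists_bound_of_continuousOn
    hf.continuousOn
  obtain ⟨j, hj⟩ := exists_nat_gt C
  have h1 := hC (z (k₀ + j)) (by
    rw [mem_closedBall_zero_iff]
    have : (0 : ℝ) < (1 / 2) ^ j := by positivity
    linarith [hbound j])
  have h2 := hkz (k₀ + j)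
  push_cast at h2
  linarith [k₀.cast_nonneg (α := ℝ)]

end Growth

section DiscreteSets

/-- A set meeting every closed ball in a finite set is closed and discrete. -/
theorem isClosed_and_discreteTopology_of_finite_inter_closedBall {X : Type*} [MetricSpace X]
    {D : Set X} (x₀ : X) (hD : ∀ R, (D ∩ closedBall x₀ R).Finite) :
    IsClosed D ∧ DiscreteTopology D := by
  rw [← isDiscrete_iff_discreteTopology, isClosed_and_discrete_iff]
  intro x
  have hfin : ((D ∩ ball x 1) \ {x}).Finite := (hD (dist x x₀ + 1)).subset fun y hy =>
    ⟨hy.1.1, mem_closedBall.mpr (by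
      linarith [dist_triangle y x x₀, mem_ball.mp hy.1.2])⟩
  rw [disjoint_principal_right]
  have h1 : ((D ∩ ball x 1) \ {x})ᶜ ∈ 𝓝 x := hfin.isClosed.isOpen_compl.mem_nhds (by simp)
  filter_upwards [mem_nhdsWithin_of_mem_nhds h1,
    mem_nhdsWithin_of_mem_nhds (ball_mem_nhds x one_pos), self_mem_nhdsWithin] with y hy hyx hne hyD
  exact hy ⟨⟨hyD, hyx⟩, hne⟩

theorem finite_inter_closedBall_of_discreteTopology {X : Type*} [MetricSpace X] [ProperSpace X]
    {D : Set X} (hc : IsClosed D) (hd : DiscreteTopology D) (x₀ : X) (R : ℝ) :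
    (D ∩ closedBall x₀ R).Finite :=
  ((isCompact_closedBall x₀ R).inter_left hc).finite
    ((isDiscrete_iff_discreteTopology.mpr hd).mono inter_subset_left)

variable {E : Type*} [NormedAddCommGroup E] [NormedSpace ℂ E] [Nontrivial E]

/-- A finite set, staying close to a spherical shell, with many points in every ball of a given
radius centred in the shell. -/
theorem exists_finset_card_inter_closedBall [ProperSpace E] (a b : ℝ) {ε : ℝ} (hε : 0 < ε)
    (N : ℕ) :
    ∃ T : Finset E, (∀ w ∈ T, a - 1 / 2 ≤ ‖w‖) ∧ ∀ w : E, a ≤ ‖w‖ → ‖w‖ ≤ b →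
      ∃ U ⊆ T, U.card = N ∧ (U : Set E) ⊆ closedBall w ε := by
  classical
  set δ : ℝ := min (ε / 2) (1 / 2)
  have hδ : 0 < δ := by positivity
  have hδ1 : δ ≤ ε / 2 := min_le_left _ _
  have hδ2 : δ ≤ 1 / 2 := min_le_right _ _
  have hshell : IsCompact (closedBall (0 : E) b ∩ {w | a ≤ ‖w‖}) :=
    (isCompact_closedBall _ _).inter_right (isClosed_le continuous_const continuous_norm)
  obtain ⟨P, hPs, hPf, hP⟩ := hshell.finite_cover_balls hδ
  lift P to Finset E using hPf
  have hinf (x : E) : ∃ U : Finset E, (U : Set E) ⊆ ball x δ ∧ U.card = N :=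
    have : (𝓝[≠] x).NeBot := Module.punctured_nhds_neBot ℂ E x
    (infinite_of_mem_nhds x (ball_mem_nhds x hδ)).exists_subset_card_eq N
  choose U hU hUN using hinf
  refine ⟨P.biUnion U, fun w hw => ?_, fun w hwa hwb => ?_⟩
  · obtain ⟨x, hx, hwx⟩ := Finset.mem_biUnion.mp hw
    have h1 := mem_ball_iff_norm.mp (hU x hwx)
    have h2 : a ≤ ‖x‖ := (hPs hx).2
    linarith [norm_sub_norm_le x w, norm_sub_rev x w]
  · obtain ⟨x, hx, hwx⟩ := mem_iUnion₂.mp (hP ⟨by simpa using hwb, hwa⟩)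
    refine ⟨U x, Finset.subset_biUnion_of_mem U hx, hUN x, fun y hy => ?_⟩
    have h1 := mem_ball.mp (hU x hy)
    have h2 := mem_ball'.mp hwx
    rw [mem_closedBall]
    linarith [dist_triangle y x w]

end DiscreteSets

section Inequivalence

variable {E : Type*} [NormedAddCommGroup E] [NormedSpace ℂ E]

/-- The derivative of a biholomorphic map has nonzero determinant. -/
theorem det_fderiv_ne_zero_of_leftInverse_s2 {f g : E → E} (hf : Differentiable ℂ f)
    (hg : Differentiable ℂ g) (hgf : Function.LeftInverse g f) (z : E) :
    (fderiv ℂ f z).det ≠ 0 := by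
  have hcomp : (fderiv ℂ g (f z)).comp (fderiv ℂ f z) = ContinuousLinearMap.id ℂ E := by
    rw [← fderiv_comp z (hg _) (hf z), hgf.comp_eq_id, fderiv_id]
  have hdet := congrArg ContinuousLinearMap.det hcomp
  intro h0
  have hmul : ((fderiv ℂ g (f z)).comp (fderiv ℂ f z)).det =
      (fderiv ℂ g (f z)).det * (fderiv ℂ f z).det := LinearMap.det_comp _ _
  rw [hmul, h0, mul_zero] at hdet
  exact zero_ne_one (hdet.trans LinearMap.det_id)

/-- For any sequence of closed discrete sets there is an infinite closed discrete set that is not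
the image of any of them under a holomorphic automorphism. -/
theorem exists_discrete_forall_image_ne [FiniteDimensional ℂ E] [Nontrivial E]
    (A : ℕ → Set E)
    (hA : ∀ i, IsClosed (A i) ∧ DiscreteTopology (A i)) :
    ∃ D : Set E, (D.Infinite ∧ IsClosed D ∧ DiscreteTopology D) ∧
      ∀ (i : ℕ) (f g : E → E), Differentiable ℂ f → Differentiable ℂ g →
        Function.LeftInverse g f → Function.RightInverse g f → f '' A i ≠ D := by
  have : ProperSpace E := FiniteDimensional.proper ℂ E
  have hAfin (i : ℕ) (R : ℝ) : (A i ∩ closedBall 0 R).Finite :=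
    finite_inter_closedBall_of_discreteTopology (hA i).1 (hA i).2 0 R
  have hnear (k : ℕ) := exists_closedBall_subset_image_near (E := E) (S := ((k : ℝ) + 1) ^ 2)
    (B := (k : ℝ) + 1) (d := (1 / 2) ^ k) (η := 1 / ((k : ℝ) + 1)) (by positivity) (by positivity)
    (by positivity) (by positivity)
  choose ε hε himage using hnear
  set N : ℕ → ℕ := fun k => k + 1 + ∑ i ∈ Finset.range (k + 1),
    (A i ∩ closedBall 0 (((k : ℝ) + 1) ^ 2 + 1)).ncard with hN
  have hnet (k : ℕ) := exists_finset_card_inter_closedBall (E := E) ((k : ℝ) - 1 / 2) (k + 1) (hε k)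
    (N k)
  choose T hTnorm hT using hnet
  have hauto (i : ℕ) (f g : E → E) (hf : Differentiable ℂ f) (hg : Differentiable ℂ g)
      (hgf : Function.LeftInverse g f) (hfg : Function.RightInverse g f) :
      f '' A i ≠ ⋃ k, (T k : Set E) := by
    intro himg
    have hdet : 0 < ‖(fderiv ℂ f 0).det‖ :=
      norm_pos_iff.mpr (det_fderiv_ne_zero_of_leftInverse_s2 hf hg hgf 0)
    have hfd : 0 < ‖fderiv ℂ f 0‖ := by
      refine norm_pos_iff.mpr fun h0 => det_fderiv_ne_zero_of_leftInverse_s2 hf hg hgf 0 ?_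
      have : Nonempty (Fin (Module.finrank ℂ E)) := Fin.pos_iff_nonempty.mp Module.finrank_pos
      rw [h0]
      exact LinearMap.det_zero' (Module.finBasis ℂ E)
    obtain ⟨k₁, hk₁⟩ := exists_nat_gt (1 / ‖(fderiv ℂ f 0).det‖)
    obtain ⟨k₂, hk₂⟩ := exists_nat_gt (2 / ‖fderiv ℂ f 0‖)
    obtain ⟨k, hk, z₀, hkz, hz₀, hgap⟩ :=
      exists_regular_growth hf.continuous hfg.surjective (max i (max k₁ k₂))
    have hik : i ≤ k := (le_max_left _ _).trans hk
    have hk₁k : (k₁ : ℝ) ≤ k := by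
      exact_mod_cast (le_max_left k₁ k₂).trans ((le_max_right _ _).trans hk)
    have hk₂k : (k₂ : ℝ) ≤ k := by
      exact_mod_cast (le_max_right k₁ k₂).trans ((le_max_right _ _).trans hk)
    have hk0 : (0 : ℝ) ≤ k := k.cast_nonneg
    have hS : ‖z₀‖ ≤ ((k : ℝ) + 1) ^ 2 := by
      rcases (norm_nonneg z₀).eq_or_lt with h0 | h0
      · rw [← h0]; positivity
      have hcauchy := norm_fderiv_le_of_norm_le_on_ball hf h0 hz₀
      rw [le_div_iff₀ h0] at hcauchy
      rw [div_lt_iff₀ hfd] at hk₂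
      by_contra! hlt
      have h1 : (2 : ℝ) < k * ‖fderiv ℂ f 0‖ := hk₂.trans_le (by gcongr)
      nlinarith [mul_lt_mul_of_pos_left hlt hfd]
    have hη : 1 / ((k : ℝ) + 1) ≤ ‖(fderiv ℂ f 0).det‖ :=
      (one_div_le (by positivity) hdet).mpr (by linarith)
    obtain ⟨w, hw1, hw2, hw3⟩ := himage k f z₀ hf hS hgap hη
    obtain ⟨U, hUT, hUN, hUw⟩ := hT k w
      (by linarith [norm_sub_norm_le (f z₀) w, norm_sub_rev (f z₀) w]) hw2
    have hUsub : (U : Set E) ⊆ f '' (A i ∩ closedBall 0 (((k : ℝ) + 1) ^ 2 + 1)) := by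
      intro u hu
      obtain ⟨x, hx, rfl⟩ := hw3 (hUw hu)
      have hmem : f x ∈ f '' A i := by
        rw [himg]; exact mem_iUnion.mpr ⟨k, hUT hu⟩
      refine ⟨x, ⟨(hgf.injective.mem_set_image).mp hmem, ?_⟩, rfl⟩
      rw [mem_ball_zero_iff] at hx
      rw [mem_closedBall_zero_iff]
      have : ((1 : ℝ) / 2) ^ k ≤ 1 := pow_le_one₀ (by norm_num) (by norm_num)
      linarith
    have hcard := (Set.ncard_le_ncard hUsub ((hAfin i _).image f)).trans
      (Set.ncard_image_le (hAfin i _))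
    rw [Set.ncard_coe_finset, hUN] at hcard
    have hsum := Finset.single_le_sum
      (f := fun i => (A i ∩ closedBall 0 (((k : ℝ) + 1) ^ 2 + 1)).ncard)
      (fun _ _ => Nat.zero_le _) (Finset.mem_range.mpr (by omega : i < k + 1))
    simp only [hN] at hcard hsum
    omega
  refine ⟨⋃ k, (T k : Set E), ⟨fun hfin => ?_,
    isClosed_and_discreteTopology_of_finite_inter_closedBall 0 fun R => ?_⟩, hauto⟩
  · set k := hfin.toFinset.card
    obtain ⟨w, hw⟩ := exists_norm_eq E (c := (k : ℝ)) k.cast_nonneg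
    obtain ⟨U, hUT, hUN, -⟩ := hT k w (by linarith) (by linarith)
    have hle := Finset.card_le_card (s := U) (t := hfin.toFinset) fun u hu =>
      hfin.mem_toFinset.mpr (mem_iUnion.mpr ⟨k, hUT hu⟩)
    simp only [hUN, hN] at hle
    omega
  · obtain ⟨m, hm⟩ := exists_nat_gt (R + 1)
    refine ((Finset.range m).finite_toSet.biUnion fun k _ => (T k).finite_toSet).subset ?_
    rintro w ⟨hw, hwR⟩
    obtain ⟨k, hk⟩ := mem_iUnion.mp hw
    refine mem_biUnion (Finset.mem_coe.mpr (Finset.mem_range.mpr ?_)) hk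
    have := hTnorm k w hk
    rw [mem_closedBall_zero_iff] at hwR
    exact_mod_cast (by linarith : (k : ℝ) < m)

end Inequivalence

/-- For every integer `n ≥ 1` there exists an uncountable family of infinite discrete subsets of
`ℂⁿ` that are pairwise inequivalent: no automorphism of `ℂⁿ` (bijective holomorphic map with
holomorphic inverse) maps one of them onto another one. -/
theorem stmt_2 (n : ℕ) (hn : 1 ≤ n) :
    ∃ (I : Type) (_ : Uncountable I) (D : I → Set (EuclideanSpace ℂ (Fin n))),
      (∀ i, (D i).Infinite ∧ IsClosed (D i) ∧ DiscreteTopology (D i)) ∧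
      ∀ i j, i ≠ j →
        ¬∃ φ ψ : EuclideanSpace ℂ (Fin n) → EuclideanSpace ℂ (Fin n),
          Differentiable ℂ φ ∧ Differentiable ℂ ψ ∧
          Function.LeftInverse ψ φ ∧ Function.RightInverse ψ φ ∧
          φ '' (D i) = D j := by
  have : Nonempty (Fin n) := ⟨⟨0, hn⟩⟩
  let E := EuclideanSpace ℂ (Fin n)
  let X : Type := {D : Set E // D.Infinite ∧ IsClosed D ∧ DiscreteTopology D}
  let s : Setoid X :=
    { r := fun D₁ D₂ => ∃ φ ψ : E → E, Differentiable ℂ φ ∧ Differentiable ℂ ψ ∧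
        Function.LeftInverse ψ φ ∧ Function.RightInverse ψ φ ∧ φ '' D₁.1 = D₂.1
      iseqv :=
        { refl := fun D => ⟨id, id, differentiable_id, differentiable_id, fun _ => rfl,
            fun _ => rfl, image_id _⟩
          symm := by
            rintro D₁ D₂ ⟨φ, ψ, hφ, hψ, hl, hr, h⟩
            exact ⟨ψ, φ, hψ, hφ, hr, hl, by rw [← h, hl.image_image]⟩
          trans := by
            rintro D₁ D₂ D₃ ⟨φ, ψ, hφ, hψ, hl, hr, h⟩ ⟨φ', ψ', hφ', hψ', hl', hr', h'⟩
            exact ⟨φ' ∘ φ, ψ ∘ ψ', hφ'.comp hφ, hψ.comp hψ', hl'.comp hl, hr'.comp hr,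
              by rw [image_comp, h, h']⟩ } }
  refine ⟨Quotient s, ?_, fun q => q.out.1, fun q => q.out.2, fun i j hij h =>
    hij (Quotient.out_equiv_out.mp h)⟩
  by_contra hcount
  rw [not_uncountable_iff] at hcount
  obtain ⟨D₀, hD₀, -⟩ := exists_discrete_forall_image_ne (E := E) (fun _ => ∅)
    fun _ => ⟨isClosed_empty, inferInstance⟩
  have : Nonempty (Quotient s) := ⟨Quotient.mk s ⟨D₀, hD₀⟩⟩
  obtain ⟨q, hq⟩ := exists_surjective_nat (Quotient s)
  obtain ⟨D, hD, hne⟩ := exists_discrete_forall_image_ne (E := E) (fun i => (q i).out.1)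
    fun i => (q i).out.2.2
  obtain ⟨i, hi⟩ := hq (Quotient.mk s ⟨D, hD⟩)
  obtain ⟨φ, ψ, hφ, hψ, hl, hr, h⟩ := Quotient.exact ((Quotient.out_eq (q i)).trans hi)
  exact hne i φ ψ hφ hψ hl hr h
end
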